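/- Let ε > 0, let Υ be a finite collection of pairwise disjoint subintervals of ℝ⁺, and let {b_υ}_{υ∈Υ} ⊂ ℝ be a collection of coefficients. Then for 1 < q < ∞, ‖ Σ_{υ∈Υ} b_υ 1_υ ‖_{M^q} ≤ C_{q,ε} |Υ|^{|1/q − 1/2| + ε} · sup_{υ∈Υ} |b_υ|, where |Υ| is the number of intervals in Υ. -/

import Mathlib

open MeasureTheory Set Filter
open scoped ENNReal NNReal Classical BigOperators RealInnerProductSpace

noncomputable section

/-- The binary digit of `x` in position `n+1` to the left of the point
(terminating expansion for dyadic rationals). -/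
def digit (n : ℤ) (x : ℝ) : ℤ := ⌊x / 2 ^ n⌋ % 2

/-- Bitwise addition `⊕` on nonnegative reals. -/
def wXor (x y : ℝ) : ℝ := ∑' n : ℤ, (((digit n x + digit n y) % 2 : ℤ) : ℝ) * 2 ^ n

/-- The `n`-th digit of the bitwise product `x ⊗ y`. -/
def wMulDigit (n : ℤ) (x y : ℝ) : ℤ :=
  ⌊∑' m : ℤ, ((digit (n - m) x * digit m y : ℤ) : ℝ)⌋ % 2

/-- Bitwise multiplication `⊗` on nonnegative reals. -/
def wMul (x y : ℝ) : ℝ := ∑' n : ℤ, ((wMulDigit n x y : ℤ) : ℝ) * 2 ^ n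

/-- The Walsh character `e(x) = exp (i π d₋₁(x))`. -/
def walshe (x : ℝ) : ℝ := (-1 : ℝ) ^ (digit (-1) x)

/-- The Walsh–Fourier transform on `ℝ⁺`; it is involutive, so it also serves
as the inverse Walsh–Fourier transform `ˇ`. -/
def walshFT (f : ℝ → ℝ) (ξ : ℝ) : ℝ := ∫ x in Set.Ici (0 : ℝ), walshe (wMul ξ x) * f x

/-- Lebesgue measure on `ℝ⁺`. -/
def μplus : Measure ℝ := volume.restrict (Set.Ici 0)

/-- `L^p` norm (real exponent `p`) of an `ℝ≥0∞`-valued function. -/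
def lpNormE (p : ℝ) (μ : Measure ℝ) (F : ℝ → ℝ≥0∞) : ℝ≥0∞ := (∫⁻ x, F x ^ p ∂μ) ^ (1 / p)

/-- The `r`-variation norm of `m` on the domain `D`. -/
def vnorm {ι E : Type*} [LinearOrder ι] [NormedAddCommGroup E] (r : ℝ) (D : Set ι)
    (m : ι → E) : ℝ≥0∞ :=
  (⨆ ξ ∈ D, (‖m ξ‖₊ : ℝ≥0∞)) +
    ⨆ (N : ℕ) (u : Fin (N + 1) → ι) (_ : StrictMono u) (_ : ∀ i, u i ∈ D),
      (∑ i : Fin N, (‖m (u i.succ) - m (u i.castSucc)‖₊ : ℝ≥0∞) ^ r) ^ (1 / r)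

/-- The Walsh `L^q`-multiplier norm. -/
def Mq (q : ℝ) (m : ℝ → ℝ) : ℝ≥0∞ :=
  ⨆ (g : ℝ → ℝ) (_ : eLpNorm g (ENNReal.ofReal q) μplus = 1),
    eLpNorm (walshFT fun ξ => m ξ * walshFT g ξ) (ENNReal.ofReal q) μplus

/-- The Walsh `L^q`-maximal-multiplier norm of a sequence of multipliers. -/
def Mqstar (q : ℝ) (m : ℤ → ℝ → ℝ) : ℝ≥0∞ :=
  ⨆ (g : ℝ → ℝ) (_ : eLpNorm g (ENNReal.ofReal q) μplus = 1),
    lpNormE q μplus fun x => ⨆ k : ℤ, (‖walshFT (fun ξ => m k ξ * walshFT g ξ) x‖₊ : ℝ≥0∞)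

/-- The `s`-variation `L^q`-multiplier norm of a sequence of multipliers. -/
def Mqs (q s : ℝ) (m : ℤ → ℝ → ℝ) : ℝ≥0∞ :=
  ⨆ (g : ℝ → ℝ) (_ : eLpNorm g (ENNReal.ofReal q) μplus = 1),
    lpNormE q μplus fun x =>
      vnorm s (Set.univ : Set ℤ) fun k => walshFT (fun ξ => m k ξ * walshFT g ξ) x

/-- Dyadic intervals `[n 2^k, (n+1) 2^k)`. -/
def IsDyadic (I : Set ℝ) : Prop :=
  ∃ n k : ℤ, I = Set.Ico ((n : ℝ) * 2 ^ k) (((n : ℝ) + 1) * 2 ^ k)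

/-- Dyadic intervals of length `2^k`. -/
def IsDyadicLen (k : ℤ) (ω : Set ℝ) : Prop :=
  ∃ n : ℤ, ω = Set.Ico ((n : ℝ) * 2 ^ k) (((n : ℝ) + 1) * 2 ^ k)

/-- The lower half of an interval. -/
def lowerHalf (ω : Set ℝ) : Set ℝ := ω ∩ Set.Iio ((sInf ω + sSup ω) / 2)

/-- The upper half of an interval. -/
def upperHalf (ω : Set ℝ) : Set ℝ := ω ∩ Set.Ici ((sInf ω + sSup ω) / 2)

/-- A bitile `I × ω ⊆ ℝ⁺ × ℝ⁺` : a rectangle of dyadic intervals of area `2`. -/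
structure Bitile where
  I : Set ℝ
  ω : Set ℝ
  hI : IsDyadic I
  hω : IsDyadic ω
  hIsub : I ⊆ Set.Ici 0
  hωsub : ω ⊆ Set.Ici 0
  harea : volume I * volume ω = 2

/-- The `L²`-normalized Walsh wave packet of the tile `I × ω`. -/
def wavePacket (I ω : Set ℝ) (x : ℝ) : ℝ :=
  Real.sqrt (volume I).toReal * walshFT (Set.indicator ω fun _ => (1 : ℝ)) (wXor x (sInf I))

/-- `⟨f, φ_{P_l}⟩`, the pairing of `f` with the wave packet of the lower tile of `P`. -/
def walshCoef (P : Bitile) (f : ℝ → ℝ) : ℝ :=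
  ∫ y in Set.Ici (0 : ℝ), f y * wavePacket P.I (lowerHalf P.ω) y

/-- The partial order on bitiles. -/
def Bitile.le (P Q : Bitile) : Prop := P.I ⊆ Q.I ∧ Q.ω ⊆ P.ω

/-- Convexity of a set of bitiles. -/
def ConvexBitiles (S : Set Bitile) : Prop :=
  ∀ P₁ P₂ P₃ : Bitile, P₁ ∈ S → P₃ ∈ S → Bitile.le P₁ P₂ → Bitile.le P₂ P₃ → P₂ ∈ S

/-- The truncated partial Walsh-sum operator attached to a collection `Ps` of bitiles. -/
def Sk (Ps : Set Bitile) (f : ℝ → ℝ) (k : ℤ) (ξ x : ℝ) : ℝ :=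
  ∑ᶠ (P : Bitile) (_ : P ∈ Ps ∧ volume P.I < 2 ^ k),
    walshCoef P f * wavePacket P.I (lowerHalf P.ω) x *
      Set.indicator (upperHalf P.ω) (fun _ => (1 : ℝ)) ξ

/-- The partial Walsh-sum operator `S[f](ξ,x) = (f̂ 1_{[0,ξ)})ˇ(x)`. -/
def Spartial (f : ℝ → ℝ) (ξ x : ℝ) : ℝ :=
  walshFT (fun η => Set.indicator (Set.Ico 0 ξ) (fun _ => (1 : ℝ)) η * walshFT f η) x

/-- A tree of bitiles with top data `(ξtop, Itop)`. -/
structure WTree where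
  carrier : Set Bitile
  ξtop : ℝ
  Itop : Set ℝ

/-- The defining conditions of a tree. -/
def IsTree (T : WTree) : Prop :=
  IsDyadic T.Itop ∧ 0 ≤ T.ξtop ∧ ∀ P ∈ T.carrier, P.I ⊆ T.Itop ∧ T.ξtop ∈ P.ω

/-- `u`-overlapping trees. -/
def UOverlapping (T : WTree) : Prop := ∀ P ∈ T.carrier, T.ξtop ∈ upperHalf P.ω

/-- `l`-overlapping trees. -/
def LOverlapping (T : WTree) : Prop := ∀ P ∈ T.carrier, T.ξtop ∈ lowerHalf P.ω

/-- `T` is td-maximal among the trees in `Cc` : maximal with respect to inclusion among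
trees in `Cc` with the same top data. -/
def TdMaximalAmong (T : WTree) (Cc : Set WTree) : Prop :=
  T ∈ Cc ∧ ∀ T' ∈ Cc, T'.ξtop = T.ξtop → T'.Itop = T.Itop →
    T.carrier ⊆ T'.carrier → T'.carrier ⊆ T.carrier

/-- Order on the lower tiles of two bitiles. -/
def lowerLE (P Q : Bitile) : Prop := P.I ⊆ Q.I ∧ lowerHalf Q.ω ⊆ lowerHalf P.ω

/-- Strict order on the lower tiles of two bitiles. -/
def lowerLT (P Q : Bitile) : Prop := lowerLE P Q ∧ ¬ lowerLE Q P

/-- `l`-convexity of a set of bitiles. -/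
def LConvex (S : Set Bitile) : Prop :=
  ∀ P P' P'' : Bitile, P ∈ S → P'' ∈ S → lowerLT P P' → lowerLT P' P'' → P' ∈ S

/-- A properly-sorted collection of `l`-overlapping trees. -/
def ProperlySorted (Ts : Set WTree) : Prop :=
  (∀ T ∈ Ts, IsTree T ∧ LOverlapping T ∧ LConvex T.carrier) ∧
  (∀ T ∈ Ts, ∀ T' ∈ Ts, T ≠ T' → T.carrier ∩ T'.carrier = ∅) ∧
  (∀ T ∈ Ts, ∀ P ∈ T.carrier, ∀ T' ∈ Ts, (T'.Itop ∩ P.I).Nonempty → T'.ξtop ∉ upperHalf P.ω)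

/-- The multiplier `𝒟_k = Σ_{|ω| = 2^k, ω ∩ Ξ ≠ ∅} a_ω 1_ω`. -/
def Dk (a : Set ℝ → ℝ) (Ξ : Set ℝ) (k : ℤ) (ξ : ℝ) : ℝ :=
  ∑ᶠ (ω : Set ℝ) (_ : IsDyadicLen k ω ∧ (ω ∩ Ξ).Nonempty),
    a ω * Set.indicator ω (fun _ => (1 : ℝ)) ξ

/-- The sequence `k ↦ Σ_{|ω| = 2^k} a_ω 1_ω(ξ)`. -/
def dyadicSum (a : Set ℝ → ℝ) (ξ : ℝ) (k : ℤ) : ℝ :=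
  ∑ᶠ (ω : Set ℝ) (_ : IsDyadicLen k ω), a ω * Set.indicator ω (fun _ => (1 : ℝ)) ξ

/-- A tile `I × ω ⊆ ℝ⁺ × ℝ⁺` : a rectangle of dyadic intervals of area `1`. -/
structure WTile where
  I : Set ℝ
  ω : Set ℝ
  hI : IsDyadic I
  hω : IsDyadic ω
  hIsub : I ⊆ Set.Ici 0
  hωsub : ω ⊆ Set.Ici 0
  harea : volume I * volume ω = 1

/-- The subset of the phase plane occupied by a tile. -/
def WTile.carrier (p : WTile) : Set (ℝ × ℝ) := p.I ×ˢ p.ω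

/-- The phase-plane projection `Π_S` associated to a region `S` which can be written as a
finite disjoint union of tiles (it is independent of the chosen tiling). -/
def phaseProj (S : Set (ℝ × ℝ)) (f : ℝ → ℝ) : ℝ → ℝ :=
  if h : ∃ ps : Set WTile, ps.Finite ∧ ps.PairwiseDisjoint WTile.carrier ∧
      (⋃ p ∈ ps, p.carrier) = S then
    fun x => ∑ᶠ p ∈ h.choose,
      (∫ y in Set.Ici (0 : ℝ), f y * wavePacket p.I p.ω y) * wavePacket p.I p.ω x
  else 0

/-- The region of the phase plane occupied by a tree. -/
def treeRegion (T : WTree) : Set (ℝ × ℝ) := ⋃ P ∈ T.carrier, P.I ×ˢ P.ω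

/-- `size(Ps, f) = sup_{T ⊆ Ps convex tree} |I_T|^{-1/2} ‖Π_T f‖_{L²}`. -/
def size (Ps : Set Bitile) (f : ℝ → ℝ) : ℝ≥0∞ :=
  ⨆ (T : WTree) (_ : IsTree T ∧ ConvexBitiles T.carrier ∧ T.carrier ⊆ Ps),
    (volume T.Itop ^ (1 / 2 : ℝ))⁻¹ * eLpNorm (phaseProj (treeRegion T) f) 2 μplus

/-!
No `ε` is lost. Truncating the symbol to frequencies below `2^K` and the function to `[0, 2^L)`,
the operator sees both only through their averages over dyadic cells, so up to scaling it is a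
multiplier operator on the finite group `(ℤ/2)^(K+L)`, whose symbol is constant on every dyadic
frequency interval avoiding the set `Ξ` of the at most `2|Υ|` cells in which an interval begins or
ends.

On the finite group, decompose `f` at height `κ` in the manner of Calderón and Zygmund, but on a
stopping interval replace `f` not by its average but by its projection to the frequencies lying, at
the dual scale, near `Ξ`. The discarded part lives on frequency intervals on which the symbol is
constant, so the operator keeps it inside the stopping interval; the retained part has
`‖g‖₂² ≲ κ |Ξ| ‖f‖₁`. Choosing `κ = t / |Ξ|^{1/2}` gives the weak `(1,1)` bound `|Ξ|^{1/2}`,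
interpolation with `L²` gives `|Ξ|^{1/q - 1/2}` for `1 < q < 2`, and duality covers `q > 2`. These
bounds are uniform in the truncations, which Fatou's lemma removes.
-/

/-! ### The finite Walsh group -/

/-- The group `(ℤ/2)^ι` of families of binary digits. It serves both as the space side and as the
frequency side, the duality being `WalshGroup.walshChar`. -/
abbrev WalshGroup (ι : Type*) := ι → Fin 2

namespace WalshGroup

section Fourier

variable {ι : Type*}

lemma add_apply_eq_zero_iff (x y : WalshGroup ι) (i : ι) : (x + y) i = 0 ↔ x i = y i :=
  (by decide : ∀ a b : Fin 2, a + b = 0 ↔ a = b) (x i) (y i)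

lemma add_eq_zero_iff (x y : WalshGroup ι) : x + y = 0 ↔ x = y := by
  simp only [funext_iff, add_apply_eq_zero_iff, Pi.zero_apply]

variable [Fintype ι]

/-- The Walsh character `x ↦ (-1)^(Σ ξᵢ xᵢ)` of frequency `ξ`. -/
def walshChar (ξ x : WalshGroup ι) : ℝ := ∏ i, (-1) ^ ((ξ i : ℕ) * (x i : ℕ))

lemma walshChar_comm (ξ x : WalshGroup ι) : walshChar ξ x = walshChar x ξ := by
  simp only [walshChar, mul_comm]

lemma walshChar_add (ξ x y : WalshGroup ι) :
    walshChar ξ (x + y) = walshChar ξ x * walshChar ξ y := by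
  have digitwise : ∀ a b c : Fin 2,
      (-1 : ℝ) ^ ((a : ℕ) * ((b + c : Fin 2) : ℕ)) =
        (-1) ^ ((a : ℕ) * b) * (-1) ^ ((a : ℕ) * c) := by
    intro a b c; fin_cases a <;> fin_cases b <;> fin_cases c <;> simp
  simp only [walshChar, Pi.add_apply, digitwise, Finset.prod_mul_distrib]

lemma add_walshChar (ξ η x : WalshGroup ι) :
    walshChar (ξ + η) x = walshChar ξ x * walshChar η x := by
  simp only [walshChar_comm _ x, walshChar_add]

lemma abs_walshChar (ξ x : WalshGroup ι) : |walshChar ξ x| = 1 := by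
  simp [walshChar, Finset.abs_prod, abs_pow]

variable [DecidableEq ι]

lemma walshChar_single (i : ι) {x : WalshGroup ι} (hx : x i ≠ 0) :
    walshChar (Pi.single i 1) x = -1 := by
  have hxi : x i = 1 := Fin.eq_one_of_ne_zero _ hx
  rw [walshChar, Finset.prod_eq_single i (fun j _ hj => by simp [Pi.single_eq_of_ne hj]) (by simp)]
  simp [hxi]

/-- The convolution kernel of the Walsh multiplier with symbol `m`. -/
def kernel (m : WalshGroup ι → ℝ) (x : WalshGroup ι) : ℝ :=
  (2 ^ Fintype.card ι)⁻¹ * ∑ ξ, m ξ * walshChar ξ x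

/- Translating the frequency by the `i`-th unit vector leaves `m` unchanged and flips the sign of
the character. -/
lemma kernel_eq_zero_of_dependsOn {m : WalshGroup ι → ℝ} {S : Set ι} (hm : DependsOn m S)
    {x : WalshGroup ι} {i : ι} (hi : i ∉ S) (hx : x i ≠ 0) : kernel m x = 0 := by
  have flip_m : ∀ ξ, m (ξ + Pi.single i 1) = m ξ := fun ξ => hm fun j hj => by
    rw [Pi.add_apply, Pi.single_eq_of_ne (ne_of_mem_of_not_mem hj hi), add_zero]
  have flip_sum : ∑ ξ, m ξ * walshChar ξ x = -∑ ξ, m ξ * walshChar ξ x := by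
    rw [← Finset.sum_neg_distrib, ← Equiv.sum_comp (Equiv.addRight (Pi.single i 1))]
    refine Finset.sum_congr rfl fun ξ _ => ?_
    rw [Equiv.coe_addRight, flip_m, add_walshChar, walshChar_single i hx, mul_neg_one, mul_neg]
  rw [kernel, self_eq_neg.1 flip_sum, mul_zero]

lemma kernel_one (x : WalshGroup ι) : kernel 1 x = if x = 0 then 1 else 0 := by
  split_ifs with h
  · simp [h, kernel, walshChar]
  · obtain ⟨i, hi⟩ := Function.ne_iff.1 h
    exact kernel_eq_zero_of_dependsOn (S := ∅) (fun _ _ _ => rfl) (Set.notMem_empty i) hi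

/-- The unnormalised Walsh–Fourier transform `f ↦ (ξ ↦ Σₓ walshChar ξ x * f x)`. -/
def transform : (WalshGroup ι → ℝ) →ₗ[ℝ] WalshGroup ι → ℝ :=
  (Matrix.of walshChar).mulVecLin

lemma transform_apply (f : WalshGroup ι → ℝ) (ξ : WalshGroup ι) :
    transform f ξ = ∑ x, walshChar ξ x * f x := rfl

lemma sum_transform_mul (f g : WalshGroup ι → ℝ) :
    ∑ ξ, transform f ξ * g ξ = ∑ x, f x * transform g x := by
  simp only [transform_apply, Finset.sum_mul, Finset.mul_sum]
  rw [Finset.sum_comm]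
  refine Finset.sum_congr rfl fun x _ => Finset.sum_congr rfl fun ξ _ => ?_
  rw [walshChar_comm]; ring

/-- The Walsh multiplier operator with symbol `m`. -/
def multiplierOp (m : WalshGroup ι → ℝ) : (WalshGroup ι → ℝ) →ₗ[ℝ] WalshGroup ι → ℝ :=
  (2 ^ Fintype.card ι : ℝ)⁻¹ • transform ∘ₗ LinearMap.mulLeft ℝ m ∘ₗ transform

lemma multiplierOp_apply (m f : WalshGroup ι → ℝ) :
    multiplierOp m f = (2 ^ Fintype.card ι : ℝ)⁻¹ • transform (m * transform f) := rfl

lemma multiplierOp_apply_eq_sum_kernel (m f : WalshGroup ι → ℝ) (x : WalshGroup ι) :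
    multiplierOp m f x = ∑ y, kernel m (x + y) * f y := by
  simp only [multiplierOp_apply, Pi.smul_apply, Pi.mul_apply, smul_eq_mul, transform_apply, kernel,
    Finset.mul_sum, Finset.sum_mul]
  rw [Finset.sum_comm]
  refine Finset.sum_congr rfl fun y _ => Finset.sum_congr rfl fun ξ _ => ?_
  rw [walshChar_comm x, walshChar_add]; ring

lemma multiplierOp_one (f : WalshGroup ι → ℝ) : multiplierOp 1 f = f := by
  funext x
  simp [multiplierOp_apply_eq_sum_kernel, kernel_one, add_eq_zero_iff]

lemma transform_transform (f : WalshGroup ι → ℝ) :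
    transform (transform f) = (2 ^ Fintype.card ι : ℝ) • f := by
  have inversion := multiplierOp_one f
  rwa [multiplierOp_apply, one_mul, inv_smul_eq_iff₀ (by positivity)] at inversion

lemma transform_multiplierOp (m f : WalshGroup ι → ℝ) :
    transform (multiplierOp m f) = m * transform f := by
  rw [multiplierOp_apply, map_smul, transform_transform, inv_smul_smul₀ (by positivity)]

lemma multiplierOp_comp (m m' f : WalshGroup ι → ℝ) :
    multiplierOp m (multiplierOp m' f) = multiplierOp (m * m') f := by
  simp only [multiplierOp_apply m, transform_multiplierOp, multiplierOp_apply (m * m'), mul_assoc]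

lemma multiplierOp_sub (m m' f : WalshGroup ι → ℝ) :
    multiplierOp (m - m') f = multiplierOp m f - multiplierOp m' f := by
  simp only [multiplierOp_apply, sub_mul, map_sub, smul_sub]

lemma multiplierOp_smul (c : ℝ) (m f : WalshGroup ι → ℝ) :
    multiplierOp (c • m) f = c • multiplierOp m f := by
  rw [multiplierOp_apply, multiplierOp_apply, smul_mul_assoc, map_smul, smul_comm]

lemma sum_multiplierOp_mul (m f g : WalshGroup ι → ℝ) :
    ∑ x, multiplierOp m f x * g x = ∑ x, f x * multiplierOp m g x := by
  simp only [multiplierOp_apply, Pi.smul_apply, smul_mul_assoc, mul_smul_comm, ← Finset.smul_sum,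
    sum_transform_mul, ← sum_transform_mul f, Pi.mul_apply, mul_left_comm, mul_assoc]

lemma sum_transform_sq (f : WalshGroup ι → ℝ) :
    ∑ ξ, transform f ξ ^ 2 = 2 ^ Fintype.card ι * ∑ x, f x ^ 2 := by
  simp only [sq]
  rw [sum_transform_mul, transform_transform, Finset.mul_sum]
  refine Finset.sum_congr rfl fun x _ => ?_
  rw [Pi.smul_apply, smul_eq_mul]; ring

lemma sum_multiplierOp_sq_le {m : WalshGroup ι → ℝ} (hm : ∀ ξ, |m ξ| ≤ 1) (f : WalshGroup ι → ℝ) :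
    ∑ x, multiplierOp m f x ^ 2 ≤ ∑ x, f x ^ 2 := by
  refine le_of_mul_le_mul_left ?_ (by positivity : (0 : ℝ) < 2 ^ Fintype.card ι)
  rw [← sum_transform_sq, ← sum_transform_sq, transform_multiplierOp]
  refine Finset.sum_le_sum fun ξ _ => ?_
  rw [Pi.mul_apply, mul_pow]
  exact mul_le_of_le_one_left (sq_nonneg _) ((sq_le_one_iff_abs_le_one _).2 (hm ξ))

/-- The binary strings that agree with `x` on `S`. -/
def subcube (S : Set ι) (x : WalshGroup ι) : Finset (WalshGroup ι) :=
  {y | ∀ i ∈ S, y i = x i}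

lemma mem_subcube {S : Set ι} {x y : WalshGroup ι} : y ∈ subcube S x ↔ ∀ i ∈ S, y i = x i := by
  simp [subcube]

lemma mem_subcube_comm {S : Set ι} {x y : WalshGroup ι} : y ∈ subcube S x ↔ x ∈ subcube S y := by
  simp only [mem_subcube, eq_comm]

lemma subcube_eq_of_mem {S : Set ι} {x y : WalshGroup ι} (h : y ∈ subcube S x) :
    subcube S y = subcube S x := by
  ext z
  simp only [mem_subcube]
  exact forall₂_congr fun i hi => by rw [mem_subcube.1 h i hi]

lemma card_subcube (S : Set ι) (x : WalshGroup ι) :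
    (subcube S x).card = 2 ^ (Finset.univ.filter (· ∉ S)).card := by
  have as_pi : subcube S x = Fintype.piFinset fun i => if i ∈ S then {x i} else Finset.univ := by
    ext y
    simp only [mem_subcube, Fintype.mem_piFinset]
    refine forall_congr' fun i => ?_
    split_ifs with h <;> simp [h]
  rw [as_pi, Fintype.card_piFinset]
  simp only [apply_ite Finset.card, Finset.card_singleton, Finset.card_univ, Fintype.card_fin,
    Finset.prod_ite, Finset.prod_const_one, Finset.prod_const, one_mul]

lemma multiplierOp_apply_of_dependsOn {m : WalshGroup ι → ℝ} {S : Set ι} (hm : DependsOn m S)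
    (f : WalshGroup ι → ℝ) (x : WalshGroup ι) :
    multiplierOp m f x = ∑ y ∈ subcube Sᶜ x, kernel m (x + y) * f y := by
  rw [multiplierOp_apply_eq_sum_kernel]
  refine (Finset.sum_subset (Finset.subset_univ _) fun _ _ hy => ?_).symm
  obtain ⟨i, hi, hne⟩ : ∃ i ∉ S, _ ≠ x i := by simpa [mem_subcube] using hy
  rw [kernel_eq_zero_of_dependsOn hm hi, zero_mul]
  rwa [Ne, add_apply_eq_zero_iff, eq_comm]

end Fourier

end WalshGroup

/-! ### Interpolation and duality on finite types -/

section Interpolation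

variable {α β : Type*} [Fintype α] [Fintype β]

/-- The distribution function `t ↦ #{x | t < |F x|}` of a function on a finite type. -/
def distribution (F : α → ℝ) (t : ℝ) : ℝ := (Finset.univ.filter fun x => t < |F x|).card

lemma distribution_le_card (F : α → ℝ) (t : ℝ) : distribution F t ≤ Fintype.card α :=
  Nat.cast_le.2 (Finset.card_le_univ _)

lemma distribution_mul_sq_le (F : α → ℝ) {t : ℝ} (ht : 0 ≤ t) :
    distribution F t * t ^ 2 ≤ ∑ x, F x ^ 2 := by
  calc distribution F t * t ^ 2
      = ∑ x ∈ Finset.univ.filter (fun x => t < |F x|), t ^ 2 := by simp [distribution]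
    _ ≤ ∑ x ∈ Finset.univ.filter (fun x => t < |F x|), F x ^ 2 := by
        refine Finset.sum_le_sum fun x hx => ?_
        rw [← sq_abs (F x)]
        exact pow_le_pow_left₀ ht (Finset.mem_filter.1 hx).2.le 2
    _ ≤ ∑ x, F x ^ 2 :=
        Finset.sum_le_univ_sum_of_nonneg fun _ => sq_nonneg _

lemma distribution_add_le {F G H : α → ℝ} (h : ∀ x, |H x| ≤ |F x| + |G x|) (s t : ℝ) :
    distribution H (s + t) ≤ distribution F s + distribution G t := by
  have cover : (Finset.univ.filter fun x => s + t < |H x|) ⊆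
      (Finset.univ.filter fun x => s < |F x|) ∪ Finset.univ.filter fun x => t < |G x| := by
    intro x
    simp only [Finset.mem_filter, Finset.mem_univ, true_and, Finset.mem_union]
    intro hx
    by_contra! hFG
    linarith [h x]
  simp only [distribution]
  exact_mod_cast (Finset.card_le_card cover).trans (Finset.card_union_le _ _)

lemma integrableOn_and_integral_indicator_Iio_rpow {a p : ℝ} (ha : 0 ≤ a) (hp : -1 < p) :
    IntegrableOn ((Iio a).indicator fun t : ℝ => t ^ p) (Ioi 0) ∧
      ∫ t in Ioi 0, (Iio a).indicator (fun t : ℝ => t ^ p) t = a ^ (p + 1) / (p + 1) := by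
  have integrable : IntervalIntegrable (fun t : ℝ => t ^ p) volume 0 a :=
    intervalIntegral.intervalIntegrable_rpow' hp
  rw [intervalIntegrable_iff_integrableOn_Ioo_of_le ha, ← Ioi_inter_Iio] at integrable
  refine ⟨?_, ?_⟩
  · rwa [IntegrableOn, integrable_indicator_iff measurableSet_Iio, IntegrableOn,
      Measure.restrict_restrict measurableSet_Iio, inter_comm]
  · rw [setIntegral_indicator measurableSet_Iio, Ioi_inter_Iio, ← integral_Ioc_eq_integral_Ioo,
      ← intervalIntegral.integral_of_le ha, integral_rpow (Or.inl hp),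
      Real.zero_rpow (by linarith), sub_zero]

lemma integrableOn_and_integral_indicator_Ici_rpow {a p : ℝ} (ha : 0 < a) (hp : p < -1) :
    IntegrableOn ((Ici a).indicator fun t : ℝ => t ^ p) (Ioi 0) ∧
      ∫ t in Ioi 0, (Ici a).indicator (fun t : ℝ => t ^ p) t = a ^ (p + 1) / (-(p + 1)) := by
  have inter : Ioi 0 ∩ Ici a = Ici a := inter_eq_right.2 fun t ht => ha.trans_le ht
  refine ⟨?_, ?_⟩
  · rw [IntegrableOn, integrable_indicator_iff measurableSet_Ici, IntegrableOn,
      Measure.restrict_restrict measurableSet_Ici, inter_comm, inter]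
    exact (integrableOn_Ici_iff_integrableOn_Ioi (by simp)).2 (integrableOn_Ioi_rpow_of_lt hp ha)
  · rw [setIntegral_indicator measurableSet_Ici, inter, integral_Ici_eq_integral_Ioi,
      integral_Ioi_rpow_of_lt hp ha, div_neg, neg_div]

lemma integrableOn_and_integral_mul_indicator_Iio_rpow {q r c : ℝ} (hq : 1 < q) (hr : 0 < r)
    (hc : 0 ≤ c) :
    IntegrableOn (fun t => c * (Iio (c / r)).indicator (fun t : ℝ => t ^ (q - 2)) t) (Ioi 0) ∧
      ∫ t in Ioi 0, c * (Iio (c / r)).indicator (fun t : ℝ => t ^ (q - 2)) t =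
        r ^ (1 - q) / (q - 1) * c ^ q := by
  obtain ⟨integrable, integral⟩ := integrableOn_and_integral_indicator_Iio_rpow
    (div_nonneg hc hr.le) (by linarith : -1 < q - 2)
  refine ⟨integrable.const_mul c, ?_⟩
  have exponent : q - 2 + 1 = q - 1 := by ring
  have hcq : c ^ q = c * c ^ (q - 1) := by
    rw [← Real.rpow_one_add' hc (by linarith)]; congr 1; ring
  have hrq : r ^ (1 - q) = (r ^ (q - 1))⁻¹ := by rw [← Real.rpow_neg hr.le, neg_sub]
  rw [integral_const_mul, integral, exponent, Real.div_rpow hc hr.le, hcq, hrq]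
  ring

lemma integrableOn_and_integral_sq_mul_indicator_Ici_rpow {q r c : ℝ} (hq0 : 0 < q) (hq : q < 2)
    (hr : 0 < r) (hc : 0 ≤ c) :
    IntegrableOn (fun t => c ^ 2 * (Ici (c / r)).indicator (fun t : ℝ => t ^ (q - 3)) t) (Ioi 0) ∧
      ∫ t in Ioi 0, c ^ 2 * (Ici (c / r)).indicator (fun t : ℝ => t ^ (q - 3)) t =
        r ^ (2 - q) / (2 - q) * c ^ q := by
  rcases hc.eq_or_lt with rfl | hc
  · simp [Real.zero_rpow hq0.ne', IntegrableOn]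
  obtain ⟨integrable, integral⟩ := integrableOn_and_integral_indicator_Ici_rpow
    (div_pos hc hr) (by linarith : q - 3 < -1)
  refine ⟨integrable.const_mul _, ?_⟩
  have exponent : q - 3 + 1 = -(2 - q) := by ring
  have hcq : c ^ q = c ^ 2 * c ^ (-(2 - q)) := by
    rw [← Real.rpow_natCast, ← Real.rpow_add hc]; congr 1; push_cast; ring
  rw [integral_const_mul, integral, exponent, Real.div_rpow hc.le hr.le, hcq,
    Real.rpow_neg hr.le, neg_neg]
  field_simp

lemma distribution_mul_rpow_eq_sum (F : α → ℝ) (q t : ℝ) :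
    distribution F (2 * t) * t ^ (q - 1) =
      ∑ x, (Iio (|F x| / 2)).indicator (fun t => t ^ (q - 1)) t := by
  simp only [indicator, mem_Iio, lt_div_iff₀' (two_pos : (0 : ℝ) < 2), ← Finset.sum_filter,
    Finset.sum_const, nsmul_eq_mul, distribution]

/- At height `t`, split `f` at the level `r * t` and apply the weak type `(1, 1)` bound to the large
part and the weak type `(2, 2)` bound to the small part. -/
lemma distribution_mul_rpow_le_of_weak_type {T : (α → ℝ) → β → ℝ}
    (hT : ∀ f g y, |T (f + g) y| ≤ |T f y| + |T g y|) {A B : ℝ}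
    (h1 : ∀ f t, 0 < t → distribution (T f) t * t ≤ A * ∑ x, |f x|)
    (h2 : ∀ f t, 0 < t → distribution (T f) t * t ^ 2 ≤ B * ∑ x, f x ^ 2)
    (q : ℝ) {r t : ℝ} (hr : 0 < r) (ht : 0 < t) (f : α → ℝ) :
    distribution (T f) (2 * t) * t ^ (q - 1) ≤
      A * ∑ x, |f x| * (Iio (|f x| / r)).indicator (fun t => t ^ (q - 2)) t +
        B * ∑ x, |f x| ^ 2 * (Ici (|f x| / r)).indicator (fun t => t ^ (q - 3)) t := by
  let large : Set α := {x | r * t < |f x|}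
  have sum_large : ∑ x, |f x| * (Iio (|f x| / r)).indicator (fun t => t ^ (q - 2)) t =
      (∑ x, |large.indicator f x|) * t ^ (q - 2) := by
    rw [Finset.sum_mul]
    refine Finset.sum_congr rfl fun x _ => ?_
    by_cases hx : r * t < |f x| <;> simp [large, hx, indicator, lt_div_iff₀' hr]
  have sum_small : ∑ x, |f x| ^ 2 * (Ici (|f x| / r)).indicator (fun t => t ^ (q - 3)) t =
      (∑ x, largeᶜ.indicator f x ^ 2) * t ^ (q - 3) := by
    rw [Finset.sum_mul]
    refine Finset.sum_congr rfl fun x _ => ?_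
    by_cases hx : r * t < |f x| <;> simp [large, hx, indicator, div_le_iff₀' hr, not_le.2, not_lt.1]
  have split : distribution (T f) (2 * t) ≤
      distribution (T (large.indicator f)) t + distribution (T (largeᶜ.indicator f)) t := by
    rw [two_mul]
    refine distribution_add_le (fun y => ?_) t t
    simpa only [indicator_self_add_compl] using hT (large.indicator f) (largeᶜ.indicator f) y
  have pow_one : t ^ (q - 1) = t * t ^ (q - 2) := by
    rw [mul_comm, ← Real.rpow_add_one ht.ne']; congr 1; ring
  have pow_two : t ^ (q - 1) = t ^ 2 * t ^ (q - 3) := by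
    rw [← Real.rpow_natCast, ← Real.rpow_add ht]; congr 1; push_cast; ring
  rw [sum_large, sum_small, ← mul_assoc, ← mul_assoc]
  calc distribution (T f) (2 * t) * t ^ (q - 1)
      ≤ (distribution (T (large.indicator f)) t + distribution (T (largeᶜ.indicator f)) t) *
          t ^ (q - 1) := by gcongr
    _ = distribution (T (large.indicator f)) t * t * t ^ (q - 2) +
          distribution (T (largeᶜ.indicator f)) t * t ^ 2 * t ^ (q - 3) := by
        rw [add_mul, mul_assoc, mul_assoc, ← pow_one, ← pow_two]
    _ ≤ _ := by gcongr ?_ * _ + ?_ * _ <;> [exact h1 _ t ht; exact h2 _ t ht]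

/-- **Marcinkiewicz interpolation** between the weak types `(1, 1)` and `(2, 2)`, with the
truncation parameter `r` left free. -/
theorem sum_rpow_le_of_weak_type {T : (α → ℝ) → β → ℝ}
    (hT : ∀ f g y, |T (f + g) y| ≤ |T f y| + |T g y|) {A B : ℝ}
    (h1 : ∀ f t, 0 < t → distribution (T f) t * t ≤ A * ∑ x, |f x|)
    (h2 : ∀ f t, 0 < t → distribution (T f) t * t ^ 2 ≤ B * ∑ x, f x ^ 2)
    {q r : ℝ} (hq1 : 1 < q) (hq2 : q < 2) (hr : 0 < r) (f : α → ℝ) :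
    ∑ y, |T f y| ^ q ≤
      2 ^ q * q * (A * r ^ (1 - q) / (q - 1) + B * r ^ (2 - q) / (2 - q)) * ∑ x, |f x| ^ q := by
  have hq0 : 0 < q := by linarith
  have layers y := integrableOn_and_integral_indicator_Iio_rpow
    (by positivity : 0 ≤ |T f y| / 2) (by linarith : -1 < q - 1)
  have large x := integrableOn_and_integral_mul_indicator_Iio_rpow hq1 hr (abs_nonneg (f x))
  have small x := integrableOn_and_integral_sq_mul_indicator_Ici_rpow hq0 hq2 hr (abs_nonneg (f x))
  have large_sum := (integrable_finsetSum Finset.univ fun x _ => (large x).1).const_mul A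
  have small_sum := (integrable_finsetSum Finset.univ fun x _ => (small x).1).const_mul B
  have integrated := setIntegral_mono_on
    (integrable_finsetSum Finset.univ fun y _ => (layers y).1) (large_sum.add small_sum)
    measurableSet_Ioi fun t ht => (distribution_mul_rpow_eq_sum (T f) q t).symm.trans_le
      (distribution_mul_rpow_le_of_weak_type hT h1 h2 q hr ht f)
  rw [integral_add' large_sum small_sum, integral_const_mul, integral_const_mul,
    integral_finsetSum _ fun y _ => (layers y).1, integral_finsetSum _ fun x _ => (large x).1,
    integral_finsetSum _ fun x _ => (small x).1] at integrated
  simp only [(layers _).2, (large _).2, (small _).2, sub_add_cancel,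
    Real.div_rpow (abs_nonneg _) zero_le_two, ← Finset.sum_div, ← Finset.mul_sum] at integrated
  rw [div_div, div_le_iff₀ (by positivity)] at integrated
  exact integrated.trans_eq (by ring)

theorem Lp_le_of_adjoint {T : (α → ℝ) → β → ℝ} {T' : (β → ℝ) → α → ℝ}
    (adjoint : ∀ f g, ∑ y, T f y * g y = ∑ x, f x * T' g x) {p q : ℝ} (hqp : q.HolderConjugate p)
    {A : ℝ} (hA : 0 ≤ A)
    (hT' : ∀ g, (∑ x, |T' g x| ^ p) ^ (1 / p) ≤ A * (∑ y, |g y| ^ p) ^ (1 / p)) (f : α → ℝ) :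
    (∑ y, |T f y| ^ q) ^ (1 / q) ≤ A * (∑ x, |f x| ^ q) ^ (1 / q) := by
  obtain ⟨φ, hφ, extremal⟩ :=
    (NNReal.isGreatest_Lp Finset.univ (fun y => Real.nnabs (T f y)) hqp).1
  let g : β → ℝ := fun y => SignType.sign (T f y) * φ y
  have norm_g : (∑ y, |g y| ^ p) ^ (1 / p) ≤ 1 := by
    refine Real.rpow_le_one (by positivity) ?_ (by simpa using hqp.symm.nonneg)
    refine (Finset.sum_le_sum fun y _ => Real.rpow_le_rpow (abs_nonneg _) ?_
      hqp.symm.nonneg).trans (by exact_mod_cast hφ : ∑ y, (φ y : ℝ) ^ p ≤ 1)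
    rw [abs_mul, NNReal.abs_eq]
    refine mul_le_of_le_one_left (φ y).2 ?_
    rcases lt_trichotomy (T f y) 0 with h | h | h <;> simp [h]
  calc (∑ y, |T f y| ^ q) ^ (1 / q)
      = ∑ y, |T f y| * φ y := by
        have extremal_real := congrArg ((↑) : ℝ≥0 → ℝ) extremal
        push_cast at extremal_real
        exact extremal_real.symm
    _ = ∑ y, T f y * g y := by simp only [g, ← mul_assoc, self_mul_sign]
    _ = ∑ x, f x * T' g x := adjoint f g
    _ ≤ (∑ x, |f x| ^ q) ^ (1 / q) * (∑ x, |T' g x| ^ p) ^ (1 / p) :=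
        Real.inner_le_Lp_mul_Lq _ _ _ hqp
    _ ≤ (∑ x, |f x| ^ q) ^ (1 / q) * A := by
        gcongr
        exact (hT' g).trans (mul_le_of_le_one_right hA norm_g)
    _ = A * (∑ x, |f x| ^ q) ^ (1 / q) := mul_comm _ _

end Interpolation

/-! ### Dyadic intervals and the stopping-time decomposition -/

namespace WalshGroup

section Dyadic

variable {n : ℕ}

/-- The dyadic interval of length `2^s` around `x` on the space side: digits are listed from the
least significant one, so the strings in it agree with `x` from position `s` on. -/
def spaceInterval (s : ℕ) (x : WalshGroup (Fin n)) : Finset (WalshGroup (Fin n)) :=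
  subcube {i | s ≤ i.val} x

/-- The dyadic interval of length `2^(n - s)` around `ξ` on the frequency side, where digits are
listed from the most significant one. -/
def freqInterval (s : ℕ) (ξ : WalshGroup (Fin n)) : Finset (WalshGroup (Fin n)) :=
  subcube {i | i.val < s} ξ

lemma card_spaceInterval_le (s : ℕ) (x : WalshGroup (Fin n)) :
    (spaceInterval s x).card ≤ 2 ^ s := by
  rw [spaceInterval, card_subcube]
  refine Nat.pow_le_pow_right two_pos ?_
  simp only [mem_ofPred_eq, not_le, Fin.card_filter_val_lt, min_le_right]

lemma card_freqInterval (s : ℕ) (ξ : WalshGroup (Fin n)) :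
    (freqInterval s ξ).card = 2 ^ (n - s) := by
  rw [freqInterval, card_subcube]
  simp only [mem_ofPred_eq, Finset.filter_not, Finset.subset_univ, Finset.card_sdiff_of_subset,
    Finset.card_univ, Fintype.card_fin, Fin.card_filter_val_lt]
  congr 1; omega

lemma spaceInterval_mono {s t : ℕ} (hst : s ≤ t) (x : WalshGroup (Fin n)) :
    spaceInterval s x ⊆ spaceInterval t x :=
  fun _ hy => mem_subcube.2 fun i hi => mem_subcube.1 hy i (hst.trans hi)

lemma spaceInterval_zero (x : WalshGroup (Fin n)) : spaceInterval 0 x = {x} := by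
  ext y; simp [spaceInterval, mem_subcube, funext_iff]

lemma spaceInterval_top (x : WalshGroup (Fin n)) : spaceInterval n x = Finset.univ := by
  ext y
  simp [spaceInterval, mem_subcube]

/-- The symbol `m` is constant on every dyadic frequency interval that does not meet `Ξ`. -/
def ConstantOff (m : WalshGroup (Fin n) → ℝ) (Ξ : Finset (WalshGroup (Fin n))) : Prop :=
  ∀ s ξ η, η ∈ freqInterval s ξ → (∀ ζ ∈ Ξ, ζ ∉ freqInterval s ξ) → m η = m ξ

/-- The indicator of the union of the dyadic frequency intervals of length `2^(n - s)` that
meet `Ξ`. -/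
def nearIndicator (Ξ : Finset (WalshGroup (Fin n))) (s : ℕ) (ξ : WalshGroup (Fin n)) : ℝ :=
  if ξ ∈ Ξ.biUnion (freqInterval s) then 1 else 0

lemma dependsOn_nearIndicator (Ξ : Finset (WalshGroup (Fin n))) (s : ℕ) :
    DependsOn (nearIndicator Ξ s) {i | i.val < s} := by
  intro ξ η h
  have same_interval : freqInterval s ξ = freqInterval s η := subcube_eq_of_mem (mem_subcube.2 h)
  have mem_near_iff : ξ ∈ Ξ.biUnion (freqInterval s) ↔ η ∈ Ξ.biUnion (freqInterval s) := by
    simp only [Finset.mem_biUnion, freqInterval, mem_subcube_comm (y := ξ),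
      mem_subcube_comm (y := η)]
    exact exists_congr fun ζ => and_congr_right' (iff_of_eq (congrArg (ζ ∈ ·) same_interval))
  simp only [nearIndicator, mem_near_iff]

lemma ConstantOff.dependsOn_sub_mul_nearIndicator {m : WalshGroup (Fin n) → ℝ}
    {Ξ : Finset (WalshGroup (Fin n))} (hm : ConstantOff m Ξ) (s : ℕ) :
    DependsOn (m - m * nearIndicator Ξ s) {i | i.val < s} := by
  intro ξ η h
  simp only [Pi.sub_apply, Pi.mul_apply, dependsOn_nearIndicator Ξ s h]
  by_cases near : η ∈ Ξ.biUnion (freqInterval s)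
  · simp only [nearIndicator, if_pos near, mul_one, sub_self]
  · rw [hm s η ξ (mem_subcube.2 h) fun ζ hζ hζη =>
      near (Finset.mem_biUnion.2 ⟨ζ, hζ, mem_subcube_comm.1 hζη⟩)]

lemma nearIndicator_mul_self (Ξ : Finset (WalshGroup (Fin n))) (s : ℕ) :
    nearIndicator Ξ s * nearIndicator Ξ s = nearIndicator Ξ s := by
  funext ξ
  simp [nearIndicator]

lemma abs_kernel_nearIndicator_le (Ξ : Finset (WalshGroup (Fin n))) {s : ℕ} (hs : s ≤ n)
    (x : WalshGroup (Fin n)) : |kernel (nearIndicator Ξ s) x| ≤ Ξ.card * (2 ^ s : ℝ)⁻¹ := by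
  have sum_le : |∑ ξ, nearIndicator Ξ s ξ * walshChar ξ x| ≤ Ξ.card * 2 ^ (n - s) := by
    calc |∑ ξ, nearIndicator Ξ s ξ * walshChar ξ x|
        ≤ ∑ ξ, |nearIndicator Ξ s ξ * walshChar ξ x| := Finset.abs_sum_le_sum_abs _ _
      _ = (Ξ.biUnion (freqInterval s)).card := by
          simp only [nearIndicator, abs_mul, abs_walshChar, mul_one, apply_ite abs, abs_one,
            abs_zero, Finset.sum_boole, Finset.filter_univ_mem]
      _ ≤ Ξ.card * 2 ^ (n - s) := by
          exact_mod_cast Finset.card_biUnion_le_card_mul _ _ _ fun ζ _ => (card_freqInterval s ζ).le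
  have scales : (2 : ℝ) ^ n = 2 ^ (n - s) * 2 ^ s := by rw [← pow_add, Nat.sub_add_cancel hs]
  rw [kernel, Fintype.card_fin, abs_mul, abs_of_pos (by positivity : (0 : ℝ) < (2 ^ n)⁻¹),
    inv_mul_le_iff₀ (by positivity), scales]
  refine sum_le.trans_eq ?_
  rw [mul_left_comm, mul_inv_cancel_right₀ (by positivity)]

/-- The average of `|f|` over the dyadic space interval of length `2^s` around `x`. -/
def dyadicAverage (f : WalshGroup (Fin n) → ℝ) (s : ℕ) (x : WalshGroup (Fin n)) : ℝ :=
  (2 ^ s)⁻¹ * ∑ y ∈ spaceInterval s x, |f y|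

/-- The points `x` for which `2^s` is the largest scale at which the dyadic average of `|f|`
exceeds `κ`. It is the union of the stopping intervals of length `2^s` of the Calderón–Zygmund
decomposition of `f` at height `κ`. -/
def stoppingSet (f : WalshGroup (Fin n) → ℝ) (κ : ℝ) (s : ℕ) : Finset (WalshGroup (Fin n)) :=
  {x | κ < dyadicAverage f s x ∧ ∀ t, s < t → t ≤ n → dyadicAverage f t x ≤ κ}

/-- The restriction of `f` to the stopping intervals of length `2^s`. -/
def stoppedPiece (f : WalshGroup (Fin n) → ℝ) (κ : ℝ) (s : ℕ) : WalshGroup (Fin n) → ℝ :=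
  indicator (stoppingSet f κ s) f

variable {f : WalshGroup (Fin n) → ℝ} {κ : ℝ} {s : ℕ} {x y : WalshGroup (Fin n)}

lemma mem_stoppingSet : x ∈ stoppingSet f κ s ↔
    κ < dyadicAverage f s x ∧ ∀ t, s < t → t ≤ n → dyadicAverage f t x ≤ κ := by
  simp [stoppingSet]

lemma dyadicAverage_eq_of_mem_spaceInterval (h : y ∈ spaceInterval s x) {t : ℕ} (hst : s ≤ t) :
    dyadicAverage f t y = dyadicAverage f t x := by
  rw [dyadicAverage, dyadicAverage,
    show spaceInterval t y = spaceInterval t x from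
      subcube_eq_of_mem (spaceInterval_mono hst x h)]

lemma mem_stoppingSet_iff_of_mem_spaceInterval (h : y ∈ spaceInterval s x) :
    y ∈ stoppingSet f κ s ↔ x ∈ stoppingSet f κ s := by
  simp only [mem_stoppingSet, dyadicAverage_eq_of_mem_spaceInterval h le_rfl]
  exact and_congr_right' <| forall₂_congr fun t hst => by
    rw [dyadicAverage_eq_of_mem_spaceInterval h hst.le]

lemma pairwiseDisjoint_stoppingSet (f : WalshGroup (Fin n) → ℝ) (κ : ℝ) :
    (Finset.range n : Set ℕ).PairwiseDisjoint (stoppingSet f κ) := by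
  have disjoint_of_lt : ∀ s t, t < n → s < t →
      Disjoint (stoppingSet f κ s) (stoppingSet f κ t) := fun s t ht hst =>
    Finset.disjoint_left.2 fun x hs ht' =>
      ((mem_stoppingSet.1 hs).2 t hst ht.le).not_gt (mem_stoppingSet.1 ht').1
  intro s hs t ht hne
  rcases hne.lt_or_gt with h | h
  · exact disjoint_of_lt s t (Finset.mem_range.1 ht) h
  · exact (disjoint_of_lt t s (Finset.mem_range.1 hs) h).symm

lemma card_stoppingSet_mul_le (f : WalshGroup (Fin n) → ℝ) (κ : ℝ) (s : ℕ) :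
    (stoppingSet f κ s).card * κ ≤ ∑ x ∈ stoppingSet f κ s, |f x| := by
  calc (stoppingSet f κ s).card * κ
      ≤ ∑ x ∈ stoppingSet f κ s, dyadicAverage f s x := by
        rw [← nsmul_eq_mul]
        exact Finset.card_nsmul_le_sum _ _ _ fun x hx => (mem_stoppingSet.1 hx).1.le
    _ = ∑ x ∈ stoppingSet f κ s, ∑ y ∈ spaceInterval s x, (2 ^ s)⁻¹ * |f y| := by
        simp only [dyadicAverage, Finset.mul_sum]
    _ = ∑ y ∈ stoppingSet f κ s, ∑ x ∈ spaceInterval s y, (2 ^ s)⁻¹ * |f y| := by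
        refine Finset.sum_comm' fun x y => ⟨fun ⟨hx, hy⟩ => ?_, fun ⟨hx, hy⟩ => ?_⟩
        · exact ⟨mem_subcube_comm.1 hy, (mem_stoppingSet_iff_of_mem_spaceInterval hy).2 hx⟩
        · exact ⟨(mem_stoppingSet_iff_of_mem_spaceInterval hx).2 hy, mem_subcube_comm.1 hx⟩
    _ ≤ ∑ y ∈ stoppingSet f κ s, |f y| := by
        refine Finset.sum_le_sum fun y _ => ?_
        rw [Finset.sum_const, nsmul_eq_mul, mul_left_comm, inv_mul_le_iff₀ (by positivity)]
        gcongr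
        exact_mod_cast card_spaceInterval_le s y

lemma sum_stoppingSet_le (f : WalshGroup (Fin n) → ℝ) (κ : ℝ) :
    ∑ s ∈ Finset.range n, ∑ x ∈ stoppingSet f κ s, |f x| ≤ ∑ x, |f x| := by
  rw [← Finset.sum_biUnion (pairwiseDisjoint_stoppingSet f κ)]
  exact Finset.sum_le_univ_sum_of_nonneg fun _ => abs_nonneg _

lemma sum_spaceInterval_le_of_mem_stoppingSet (hs : s < n) (hx : x ∈ stoppingSet f κ s) :
    ∑ y ∈ spaceInterval s x, |f y| ≤ 2 ^ s * (2 * κ) := by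
  have parent_average := (mem_stoppingSet.1 hx).2 (s + 1) s.lt_succ_self hs
  rw [dyadicAverage, inv_mul_le_iff₀ (by positivity), pow_succ, mul_assoc] at parent_average
  refine le_trans ?_ parent_average
  exact Finset.sum_le_sum_of_subset_of_nonneg
    (spaceInterval_mono s.le_succ x) fun _ _ _ => abs_nonneg _

/- The operator acts inside each dyadic interval of length `2^s`. -/
lemma multiplierOp_stoppedPiece_eq_zero {m : WalshGroup (Fin n) → ℝ}
    (hm : DependsOn m {i | i.val < s}) (hx : x ∉ stoppingSet f κ s) :
    multiplierOp m (stoppedPiece f κ s) x = 0 := by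
  rw [multiplierOp_apply_of_dependsOn hm]
  refine Finset.sum_eq_zero fun y hy => ?_
  have hy' : y ∈ spaceInterval s x := by simpa [spaceInterval, compl_ofPred] using hy
  simp [stoppedPiece, mem_stoppingSet_iff_of_mem_spaceInterval hy', hx]

end Dyadic

section CalderonZygmund

variable {n : ℕ} {m f : WalshGroup (Fin n) → ℝ} {Ξ : Finset (WalshGroup (Fin n))} {κ : ℝ} {s : ℕ}
  {x : WalshGroup (Fin n)}

lemma abs_stoppedPiece_le (f : WalshGroup (Fin n) → ℝ) (κ : ℝ) (s : ℕ) (x : WalshGroup (Fin n)) :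
    |stoppedPiece f κ s x| ≤ |f x| := by
  by_cases hx : x ∈ stoppingSet f κ s <;> simp [stoppedPiece, hx]

lemma abs_multiplierOp_stoppedPiece_le (Ξ : Finset (WalshGroup (Fin n))) (hs : s < n)
    (hx : x ∈ stoppingSet f κ s) :
    |multiplierOp (nearIndicator Ξ s) (stoppedPiece f κ s) x| ≤ 2 * κ * Ξ.card := by
  have local_sum : multiplierOp (nearIndicator Ξ s) (stoppedPiece f κ s) x =
      ∑ y ∈ spaceInterval s x, kernel (nearIndicator Ξ s) (x + y) * stoppedPiece f κ s y := by
    rw [multiplierOp_apply_of_dependsOn (dependsOn_nearIndicator Ξ s)]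
    simp only [spaceInterval, compl_ofPred, not_lt]
  calc |multiplierOp (nearIndicator Ξ s) (stoppedPiece f κ s) x|
      ≤ ∑ y ∈ spaceInterval s x,
          |kernel (nearIndicator Ξ s) (x + y) * stoppedPiece f κ s y| := by
        rw [local_sum]
        exact Finset.abs_sum_le_sum_abs _ _
    _ ≤ ∑ y ∈ spaceInterval s x, Ξ.card * (2 ^ s : ℝ)⁻¹ * |f y| := by
        refine Finset.sum_le_sum fun y _ => ?_
        rw [abs_mul]
        exact mul_le_mul (abs_kernel_nearIndicator_le Ξ hs.le _) (abs_stoppedPiece_le f κ s y)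
          (abs_nonneg _) (by positivity)
    _ ≤ Ξ.card * (2 ^ s : ℝ)⁻¹ * (2 ^ s * (2 * κ)) := by
        rw [← Finset.mul_sum]
        gcongr
        exact sum_spaceInterval_le_of_mem_stoppingSet hs hx
    _ = 2 * κ * Ξ.card := by field_simp

/- The symbol is idempotent, so one factor `multiplierOp` of the square can be moved away by
self-adjointness; this leaves a pairing of `f` with a bounded function. -/
lemma sum_multiplierOp_stoppedPiece_sq_le (Ξ : Finset (WalshGroup (Fin n)))
    (f : WalshGroup (Fin n) → ℝ) (κ : ℝ) (hs : s < n) :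
    ∑ x, multiplierOp (nearIndicator Ξ s) (stoppedPiece f κ s) x ^ 2 ≤
      2 * κ * Ξ.card * ∑ x ∈ stoppingSet f κ s, |f x| := by
  set h := stoppedPiece f κ s with h_def
  calc ∑ x, multiplierOp (nearIndicator Ξ s) h x ^ 2
      = ∑ x, h x * multiplierOp (nearIndicator Ξ s) h x := by
        simp only [sq]
        rw [sum_multiplierOp_mul, multiplierOp_comp, nearIndicator_mul_self]
    _ = ∑ x ∈ stoppingSet f κ s, f x * multiplierOp (nearIndicator Ξ s) h x := by
        rw [← Finset.sum_subset (Finset.subset_univ (stoppingSet f κ s)) fun x _ hx => ?_]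
        · exact Finset.sum_congr rfl fun x hx => by simp [h_def, stoppedPiece, hx]
        · simp [h_def, stoppedPiece, hx]
    _ ≤ ∑ x ∈ stoppingSet f κ s, |f x| * (2 * κ * Ξ.card) := by
        refine Finset.sum_le_sum fun x hx => (le_abs_self _).trans ?_
        rw [abs_mul]
        gcongr
        exact abs_multiplierOp_stoppedPiece_le Ξ hs hx
    _ = 2 * κ * Ξ.card * ∑ x ∈ stoppingSet f κ s, |f x| := by rw [← Finset.sum_mul, mul_comm]

lemma sq_sum_eq_sum_sq_of_mul_eq_zero {R κ : Type*} [CommSemiring R] {S : Finset κ} {u : κ → R}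
    (hu : (S : Set κ).Pairwise fun i j => u i * u j = 0) :
    (∑ i ∈ S, u i) ^ 2 = ∑ i ∈ S, u i ^ 2 := by
  rw [sq, Finset.sum_mul_sum]
  refine Finset.sum_congr rfl fun i hi => ?_
  rw [Finset.sum_eq_single_of_mem i hi fun j hj hji => hu hi hj hji.symm, sq]

/-- The union of all stopping intervals of `f` at height `κ`. -/
def stoppingUnion (f : WalshGroup (Fin n) → ℝ) (κ : ℝ) : Finset (WalshGroup (Fin n)) :=
  (Finset.range n).biUnion (stoppingSet f κ)

lemma card_stoppingUnion_mul_le (f : WalshGroup (Fin n) → ℝ) (κ : ℝ) :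
    (stoppingUnion f κ).card * κ ≤ ∑ x, |f x| := by
  calc (stoppingUnion f κ).card * κ
      = ∑ s ∈ Finset.range n, (stoppingSet f κ s).card * κ := by
        rw [stoppingUnion, Finset.card_biUnion (pairwiseDisjoint_stoppingSet f κ), Nat.cast_sum,
          Finset.sum_mul]
    _ ≤ ∑ s ∈ Finset.range n, ∑ x ∈ stoppingSet f κ s, |f x| :=
        Finset.sum_le_sum fun s _ => card_stoppingSet_mul_le f κ s
    _ ≤ ∑ x, |f x| := sum_stoppingSet_le f κ

lemma abs_le_of_notMem_stoppingUnion (top_le : dyadicAverage f n x ≤ κ)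
    (hx : x ∉ stoppingUnion f κ) : |f x| ≤ κ := by
  by_contra! h
  let P (s : ℕ) : Prop := κ < dyadicAverage f s x
  have zero_spec : P 0 := by simpa [P, dyadicAverage, spaceInterval_zero] using h
  have largest_spec : P (Nat.findGreatest P n) := Nat.findGreatest_spec n.zero_le zero_spec
  have largest_ne : Nat.findGreatest P n ≠ n := fun e => (e ▸ largest_spec).not_ge top_le
  refine hx (Finset.mem_biUnion.2 ⟨Nat.findGreatest P n,
    Finset.mem_range.2 ((Nat.findGreatest_le n).lt_of_ne largest_ne), mem_stoppingSet.2
      ⟨largest_spec, fun t ht htn => not_lt.1 (Nat.findGreatest_is_greatest ht htn)⟩⟩)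

lemma compl_indicator_add_sum_stoppedPiece (f : WalshGroup (Fin n) → ℝ) (κ : ℝ) :
    indicator (stoppingUnion f κ : Set (WalshGroup (Fin n)))ᶜ f +
      ∑ s ∈ Finset.range n, stoppedPiece f κ s = f := by
  have pieces : ∑ s ∈ Finset.range n, stoppedPiece f κ s = indicator (stoppingUnion f κ) f := by
    simp only [stoppingUnion, Finset.coe_biUnion, Finset.mem_coe]
    rw [Finset.indicator_biUnion]
    · funext x
      simp only [stoppedPiece, Finset.sum_apply]
    · exact fun s hs t ht hst =>
        Finset.disjoint_coe.2 (pairwiseDisjoint_stoppingSet f κ hs ht hst)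
  rw [pieces, indicator_compl_add_self]

/-- The good part of the Calderón–Zygmund decomposition adapted to `Ξ`: on each stopping interval,
`f` is replaced by its projection to the frequencies near `Ξ`, where "near" is at the scale dual
to the interval. -/
def goodPart (Ξ : Finset (WalshGroup (Fin n))) (f : WalshGroup (Fin n) → ℝ) (κ : ℝ) :
    WalshGroup (Fin n) → ℝ :=
  indicator (stoppingUnion f κ : Set (WalshGroup (Fin n)))ᶜ f +
    ∑ s ∈ Finset.range n, multiplierOp (nearIndicator Ξ s) (stoppedPiece f κ s)

lemma ConstantOff.multiplierOp_goodPart_eq (hm : ConstantOff m Ξ) (hx : x ∉ stoppingUnion f κ) :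
    multiplierOp m (goodPart Ξ f κ) x = multiplierOp m f x := by
  conv_rhs => rw [← compl_indicator_add_sum_stoppedPiece f κ]
  simp only [goodPart, map_add, map_sum, Pi.add_apply, Finset.sum_apply, add_right_inj]
  refine Finset.sum_congr rfl fun s hs => ?_
  have hxs : x ∉ stoppingSet f κ s := fun h => hx (Finset.mem_biUnion.2 ⟨s, hs, h⟩)
  have far_part :=
    multiplierOp_stoppedPiece_eq_zero (hm.dependsOn_sub_mul_nearIndicator s) hxs
  rw [multiplierOp_sub, Pi.sub_apply, sub_eq_zero] at far_part
  rw [far_part, multiplierOp_comp]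

lemma sum_compl_indicator_sq_le (hκ : 0 ≤ κ) (top_le : ∀ x, dyadicAverage f n x ≤ κ) :
    ∑ x, indicator (stoppingUnion f κ : Set (WalshGroup (Fin n)))ᶜ f x ^ 2 ≤ κ * ∑ x, |f x| := by
  rw [Finset.mul_sum]
  refine Finset.sum_le_sum fun x _ => ?_
  by_cases hx : x ∈ stoppingUnion f κ
  · simpa [hx] using mul_nonneg hκ (abs_nonneg (f x))
  · have bound := abs_le_of_notMem_stoppingUnion (top_le x) hx
    simpa [hx, ← sq_abs (f x), sq] using mul_le_mul_of_nonneg_right bound (abs_nonneg (f x))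

lemma sum_sum_multiplierOp_stoppedPiece_sq_le (Ξ : Finset (WalshGroup (Fin n)))
    (f : WalshGroup (Fin n) → ℝ) (hκ : 0 ≤ κ) :
    ∑ x, (∑ s ∈ Finset.range n, multiplierOp (nearIndicator Ξ s) (stoppedPiece f κ s) x) ^ 2 ≤
      2 * κ * Ξ.card * ∑ x, |f x| := by
  have disjoint_supports (x : WalshGroup (Fin n)) : (Finset.range n : Set ℕ).Pairwise fun s t =>
      multiplierOp (nearIndicator Ξ s) (stoppedPiece f κ s) x *
        multiplierOp (nearIndicator Ξ t) (stoppedPiece f κ t) x = 0 := by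
    intro s hs t ht hst
    by_cases hx : x ∈ stoppingSet f κ s
    · have hx' := Finset.disjoint_left.1 (pairwiseDisjoint_stoppingSet f κ hs ht hst) hx
      rw [multiplierOp_stoppedPiece_eq_zero (dependsOn_nearIndicator Ξ t) hx', mul_zero]
    · rw [multiplierOp_stoppedPiece_eq_zero (dependsOn_nearIndicator Ξ s) hx, zero_mul]
  calc ∑ x, (∑ s ∈ Finset.range n, multiplierOp (nearIndicator Ξ s) (stoppedPiece f κ s) x) ^ 2
      = ∑ s ∈ Finset.range n,
          ∑ x, multiplierOp (nearIndicator Ξ s) (stoppedPiece f κ s) x ^ 2 := by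
        rw [Finset.sum_comm]
        exact Finset.sum_congr rfl fun x _ =>
          sq_sum_eq_sum_sq_of_mul_eq_zero (disjoint_supports x)
    _ ≤ ∑ s ∈ Finset.range n, 2 * κ * Ξ.card * ∑ x ∈ stoppingSet f κ s, |f x| :=
        Finset.sum_le_sum fun s hs =>
          sum_multiplierOp_stoppedPiece_sq_le Ξ f κ (Finset.mem_range.1 hs)
    _ ≤ 2 * κ * Ξ.card * ∑ x, |f x| := by
        rw [← Finset.mul_sum]
        gcongr
        exact sum_stoppingSet_le f κ

lemma sum_goodPart_sq_le (hκ : 0 ≤ κ) (top_le : ∀ x, dyadicAverage f n x ≤ κ) :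
    ∑ x, goodPart Ξ f κ x ^ 2 ≤ 2 * κ * (1 + 2 * Ξ.card) * ∑ x, |f x| := by
  calc ∑ x, goodPart Ξ f κ x ^ 2
      ≤ ∑ x, 2 * (indicator (stoppingUnion f κ : Set (WalshGroup (Fin n)))ᶜ f x ^ 2 +
          (∑ s ∈ Finset.range n, multiplierOp (nearIndicator Ξ s) (stoppedPiece f κ s) x) ^ 2) := by
        refine Finset.sum_le_sum fun x _ => ?_
        rw [goodPart, Pi.add_apply, Finset.sum_apply]
        exact add_sq_le
    _ ≤ 2 * (κ * ∑ x, |f x| + 2 * κ * Ξ.card * ∑ x, |f x|) := by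
        rw [← Finset.mul_sum, Finset.sum_add_distrib]
        gcongr
        · exact sum_compl_indicator_sq_le hκ top_le
        · exact sum_sum_multiplierOp_stoppedPiece_sq_le Ξ f hκ
    _ = 2 * κ * (1 + 2 * Ξ.card) * ∑ x, |f x| := by ring

lemma ConstantOff.distribution_le (hm : ConstantOff m Ξ) (f : WalshGroup (Fin n) → ℝ) (κ t : ℝ) :
    distribution (multiplierOp m f) t ≤
      (stoppingUnion f κ).card + distribution (multiplierOp m (goodPart Ξ f κ)) t := by
  rw [distribution, distribution, ← Nat.cast_add, Nat.cast_le]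
  refine (Finset.card_le_card fun x hx => ?_).trans (Finset.card_union_le _ _)
  rw [Finset.mem_union, or_iff_not_imp_left]
  intro hxU
  simpa [hm.multiplierOp_goodPart_eq hxU] using hx

/- The height `t / r` balances the size of the stopping intervals against the `L²` bound of the
good part. -/
lemma ConstantOff.weak_type_one (hm : ConstantOff m Ξ) (hm1 : ∀ ξ, |m ξ| ≤ 1) {r : ℝ}
    (hr : 1 ≤ r) (hΞ : Ξ.card ≤ r ^ 2) (f : WalshGroup (Fin n) → ℝ) {t : ℝ} (ht : 0 < t) :
    distribution (multiplierOp m f) t * t ≤ 7 * r * ∑ x, |f x| := by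
  have hr0 : 0 < r := one_pos.trans_le hr
  obtain ⟨κ, hκ, rfl⟩ : ∃ κ, 0 < κ ∧ t = κ * r := ⟨t / r, by positivity, by field_simp⟩
  have sum_nonneg : 0 ≤ ∑ x, |f x| := Finset.sum_nonneg fun _ _ => abs_nonneg _
  by_cases top_le : ∀ x, dyadicAverage f n x ≤ κ
  · have good_bound :
        distribution (multiplierOp m (goodPart Ξ f κ)) (κ * r) * (κ * r) ^ 2 ≤
          6 * κ * r ^ 2 * ∑ x, |f x| := by
      refine (distribution_mul_sq_le _ ht.le).trans <| (sum_multiplierOp_sq_le hm1 _).trans <|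
        (sum_goodPart_sq_le hκ.le top_le).trans ?_
      rw [show 6 * κ * r ^ 2 = 2 * κ * (3 * r ^ 2) by ring]
      gcongr
      linarith [one_le_pow₀ hr (n := 2)]
    calc distribution (multiplierOp m f) (κ * r) * (κ * r)
        ≤ ((stoppingUnion f κ).card + distribution (multiplierOp m (goodPart Ξ f κ)) (κ * r)) *
            (κ * r) := by gcongr; exact hm.distribution_le f κ _
      _ = (stoppingUnion f κ).card * κ * r +
            distribution (multiplierOp m (goodPart Ξ f κ)) (κ * r) * (κ * r) ^ 2 / (κ * r) := by
          field_simp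
      _ ≤ (∑ x, |f x|) * r + 6 * κ * r ^ 2 * (∑ x, |f x|) / (κ * r) := by
          gcongr; exact card_stoppingUnion_mul_le f κ
      _ = 7 * r * ∑ x, |f x| := by field_simp; ring
  · obtain ⟨x, hx⟩ := not_forall.1 top_le
    rw [not_le, dyadicAverage, spaceInterval_top, lt_inv_mul_iff₀ (by positivity)] at hx
    have all : distribution (multiplierOp m f) (κ * r) ≤ 2 ^ n := by
      simpa using distribution_le_card (multiplierOp m f) (κ * r)
    calc distribution (multiplierOp m f) (κ * r) * (κ * r) ≤ 2 ^ n * (κ * r) := by gcongr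
      _ = 2 ^ n * κ * r := by ring
      _ ≤ (∑ x, |f x|) * r := by gcongr
      _ ≤ 7 * r * ∑ x, |f x| := by nlinarith

end CalderonZygmund

section LpBound

variable {n : ℕ} {m : WalshGroup (Fin n) → ℝ} {Ξ : Finset (WalshGroup (Fin n))} {r : ℝ}

lemma ConstantOff.sum_rpow_le (hm : ConstantOff m Ξ) (hm1 : ∀ ξ, |m ξ| ≤ 1) (hr : 1 ≤ r)
    (hΞ : Ξ.card ≤ r ^ 2) {q : ℝ} (hq1 : 1 < q) (hq2 : q < 2) (f : WalshGroup (Fin n) → ℝ) :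
    ∑ x, |multiplierOp m f x| ^ q ≤
      2 ^ q * q * (7 / (q - 1) + 1 / (2 - q)) * r ^ (2 - q) * ∑ x, |f x| ^ q := by
  have hr0 : 0 < r := one_pos.trans_le hr
  refine (sum_rpow_le_of_weak_type (T := multiplierOp m) (A := 7 * r) (B := 1) (r := r)
    ?_ ?_ ?_ hq1 hq2 hr0 f).trans_eq ?_
  · intro f g x
    rw [map_add]
    exact abs_add_le _ _
  · exact fun f t ht => hm.weak_type_one hm1 hr hΞ f ht
  · intro f t ht
    rw [one_mul]
    exact (distribution_mul_sq_le _ ht.le).trans (sum_multiplierOp_sq_le hm1 f)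
  · have split_power : r ^ (2 - q) = r * r ^ (1 - q) := by
      rw [← Real.rpow_one_add' hr0.le (by linarith)]; congr 1; ring
    rw [split_power]; ring

/-- `C` bounds the `ℓ^q` operator norms of all Walsh multipliers whose symbols are bounded by `1`
and constant off at most `r²` frequencies, up to the factor `r^(2|1/q - 1/2|)`. -/
def IsMultiplierConstant (q C : ℝ) : Prop :=
  ∀ (n : ℕ) (m : WalshGroup (Fin n) → ℝ) (Ξ : Finset (WalshGroup (Fin n))),
    ConstantOff m Ξ → (∀ ξ, |m ξ| ≤ 1) → ∀ r : ℝ, 1 ≤ r → Ξ.card ≤ r ^ 2 →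
      ∀ f : WalshGroup (Fin n) → ℝ, (∑ x, |multiplierOp m f x| ^ q) ^ (1 / q) ≤
        C * r ^ (2 * |1 / q - 1 / 2|) * (∑ x, |f x| ^ q) ^ (1 / q)

lemma isMultiplierConstant_two : IsMultiplierConstant 2 1 := by
  intro n m Ξ _ hm1 r _ _ f
  simp only [sub_self, abs_zero, mul_zero, Real.rpow_zero, mul_one, one_mul]
  exact Real.rpow_le_rpow (by positivity) (by simpa using sum_multiplierOp_sq_le hm1 f)
    (by norm_num)

lemma exists_isMultiplierConstant_of_lt_two {q : ℝ} (hq1 : 1 < q) (hq2 : q < 2) :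
    ∃ C, 0 < C ∧ IsMultiplierConstant q C := by
  have hq0 : 0 < q := one_pos.trans hq1
  have constant_pos : 0 < 2 ^ q * q * (7 / (q - 1) + 1 / (2 - q)) :=
    mul_pos (by positivity)
      (add_pos (div_pos (by norm_num) (sub_pos.2 hq1)) (one_div_pos.2 (sub_pos.2 hq2)))
  refine ⟨(2 ^ q * q * (7 / (q - 1) + 1 / (2 - q))) ^ (1 / q), by positivity, ?_⟩
  intro n m Ξ hm hm1 r hr hΞ f
  have hr0 : 0 < r := one_pos.trans_le hr
  have exponent : 2 * |1 / q - 1 / 2| = (2 - q) * (1 / q) := by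
    rw [abs_of_pos (sub_pos.2 (one_div_lt_one_div_of_lt hq0 hq2))]
    field_simp
  rw [exponent, Real.rpow_mul hr0.le, ← Real.mul_rpow (by positivity) (by positivity),
    ← Real.mul_rpow (by positivity) (by positivity)]
  exact Real.rpow_le_rpow (by positivity) (hm.sum_rpow_le hm1 hr hΞ hq1 hq2 f) (by positivity)

lemma IsMultiplierConstant.of_holderConjugate {p q C : ℝ} (hC : 0 ≤ C) (hqp : q.HolderConjugate p)
    (h : IsMultiplierConstant p C) : IsMultiplierConstant q C := by
  intro n m Ξ hm hm1 r hr hΞ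
  have hr0 : 0 < r := one_pos.trans_le hr
  have exponent : |1 / p - 1 / 2| = |1 / q - 1 / 2| := by
    rw [← abs_neg, one_div, one_div q, ← hqp.one_sub_inv]
    congr 1; ring
  refine Lp_le_of_adjoint (sum_multiplierOp_mul m) hqp (by positivity) fun f => ?_
  rw [← exponent]
  exact h n m Ξ hm hm1 r hr hΞ f

theorem exists_isMultiplierConstant {q : ℝ} (hq1 : 1 < q) :
    ∃ C, 0 < C ∧ IsMultiplierConstant q C := by
  rcases lt_trichotomy q 2 with hq2 | rfl | hq2
  · exact exists_isMultiplierConstant_of_lt_two hq1 hq2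
  · exact ⟨1, one_pos, isMultiplierConstant_two⟩
  · have hqp := Real.HolderConjugate.conjExponent hq1
    have conj_lt_two : q.conjExponent < 2 := by
      rw [Real.conjExponent, div_lt_iff₀] <;> linarith
    obtain ⟨C, hC, h⟩ := exists_isMultiplierConstant_of_lt_two hqp.symm.lt conj_lt_two
    exact ⟨C, hC, h.of_holderConjugate hC.le hqp⟩

end LpBound

end WalshGroup

/-! ### Binary digits of real numbers -/

section Digits

lemma digit_eq_zero_or_one (n : ℤ) (x : ℝ) : digit n x = 0 ∨ digit n x = 1 :=
  Int.emod_two_eq_zero_or_one _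

lemma digit_eq_zero_of_lt {n k : ℤ} {x : ℝ} (h0 : 0 ≤ x) (h : x < 2 ^ k) (hk : k ≤ n) :
    digit n x = 0 := by
  have hx : x < 2 ^ n := h.trans_le (zpow_le_zpow_right₀ one_le_two hk)
  have hfloor : ⌊x / 2 ^ n⌋ = 0 :=
    Int.floor_eq_zero_iff.2 ⟨by positivity, (div_lt_one (by positivity)).2 hx⟩
  rw [digit, hfloor, Int.zero_emod]

lemma digit_eq_one_of_mem_Ico {n : ℤ} {x : ℝ} (hx : x ∈ Ico ((2 : ℝ) ^ n) (2 ^ (n + 1))) :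
    digit n x = 1 := by
  have hp : (0 : ℝ) < 2 ^ n := by positivity
  have hfloor : ⌊x / 2 ^ n⌋ = 1 := by
    rw [Int.floor_eq_iff, le_div_iff₀ hp, div_lt_iff₀ hp]
    have := hx.2
    rw [zpow_add_one₀ two_ne_zero] at this
    constructor <;> push_cast <;> linarith [hx.1]
  rw [digit, hfloor, Int.one_emod_two]

lemma floor_div_zpow_add (x : ℝ) (k : ℤ) (j : ℕ) :
    ⌊x / 2 ^ (k + j)⌋ = ⌊x / 2 ^ k⌋ / 2 ^ j := by
  rw [zpow_add₀ two_ne_zero, zpow_natCast, ← div_div]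
  exact_mod_cast Int.floor_div_natCast (x / 2 ^ k) (2 ^ j)

lemma floor_div_zpow_eq_two_mul_add_digit (x : ℝ) (k : ℤ) :
    ⌊x / 2 ^ k⌋ = 2 * ⌊x / 2 ^ (k + 1)⌋ + digit k x := by
  have h := floor_div_zpow_add x k 1
  rw [Nat.cast_one, pow_one] at h
  rw [h, digit, Int.mul_ediv_add_emod]

lemma digit_add_natCast (x : ℝ) (k : ℤ) (j : ℕ) :
    digit (k + j) x = ⌊x / 2 ^ k⌋ / 2 ^ j % 2 := by
  rw [digit, floor_div_zpow_add]

lemma digit_eq_of_floor_eq {x y : ℝ} {k n : ℤ} (h : ⌊x / 2 ^ k⌋ = ⌊y / 2 ^ k⌋) (hk : k ≤ n) :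
    digit n x = digit n y := by
  obtain ⟨j, rfl⟩ := Int.le.dest hk
  rw [digit_add_natCast, digit_add_natCast, h]

lemma digit_neg_add_natCast {x : ℝ} (hx : 0 ≤ x) (K i : ℕ) :
    digit (-(K : ℤ) + i) x = ((⌊x * 2 ^ K⌋₊ / 2 ^ i % 2 : ℕ) : ℤ) := by
  rw [digit_add_natCast, zpow_neg, div_inv_eq_mul, zpow_natCast,
    ← Int.natCast_floor_eq_floor (by positivity)]
  norm_cast

lemma eq_of_forall_floor_eq {x y : ℝ} {m : ℤ}
    (h : ∀ j : ℕ, ⌊x / 2 ^ (m - j)⌋ = ⌊y / 2 ^ (m - j)⌋) : x = y := by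
  have hle (j : ℕ) : |x - y| ≤ 2 ^ m * (1 / 2) ^ j := by
    have hlt := Int.abs_sub_lt_one_of_floor_eq_floor (h j)
    rw [← sub_div, abs_div, abs_of_pos (by positivity : (0 : ℝ) < 2 ^ (m - (j : ℤ))),
      div_lt_one (by positivity), zpow_sub₀ two_ne_zero] at hlt
    simpa [div_eq_mul_inv] using hlt.le
  have hlim : Tendsto (fun j : ℕ => (2 : ℝ) ^ m * (1 / 2) ^ j) atTop (nhds (2 ^ m * 0)) :=
    (tendsto_pow_atTop_nhds_zero_of_lt_one (by norm_num) (by norm_num)).const_mul _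
  have hzero : |x - y| ≤ 0 := by simpa only [mul_zero] using ge_of_tendsto' hlim hle
  exact sub_eq_zero.1 (abs_nonpos_iff.1 hzero)

end Digits

section DigitsOfSeries

lemma two_mul_ofDigits (a : ℕ → Fin 2) :
    2 * Real.ofDigits a = (a 0 : ℕ) + Real.ofDigits fun i => a (i + 1) := by
  rw [Real.ofDigits_eq_sum_add_ofDigits a 1]
  simp only [Finset.sum_range_one, Real.ofDigitsTerm]
  norm_num
  ring

lemma ofDigits_lt_one {a : ℕ → Fin 2} {i : ℕ} (hi : a i = 0) : Real.ofDigits a < 1 := by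
  have hstep := two_mul_ofDigits a
  induction i generalizing a with
  | zero =>
    have := Real.ofDigits_le_one fun i => a (i + 1)
    simp only [hi, Fin.val_zero, Nat.cast_zero] at hstep
    linarith
  | succ i ih =>
    have := ih (a := fun i => a (i + 1)) hi (two_mul_ofDigits _)
    have ha : ((a 0 : ℕ) : ℝ) ≤ 1 := by exact_mod_cast Nat.le_of_lt_succ (a 0).isLt
    linarith

lemma floor_two_pow_mul_ofDigits_emod_two {a : ℕ → Fin 2} {i j : ℕ} (hji : j < i)
    (hi : a i = 0) : ⌊2 ^ (j + 1) * Real.ofDigits a⌋ % 2 = (a j : ℕ) := by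
  have hstep := two_mul_ofDigits a
  obtain ⟨i, rfl⟩ : ∃ i', i = i' + 1 := ⟨i - 1, by omega⟩
  induction j generalizing a i with
  | zero =>
    have hfloor : ⌊Real.ofDigits fun i => a (i + 1)⌋ = 0 :=
      Int.floor_eq_zero_iff.2 ⟨Real.ofDigits_nonneg _, ofDigits_lt_one hi⟩
    rw [zero_add, pow_one, hstep, Int.floor_natCast_add, hfloor]
    omega
  | succ j ih =>
    obtain ⟨i, rfl⟩ : ∃ i', i = i' + 1 := ⟨i - 1, by omega⟩
    have hsplit : 2 ^ (j + 1 + 1) * Real.ofDigits a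
        = ((2 * (2 ^ j * (a 0 : ℕ)) : ℤ) : ℝ)
          + 2 ^ (j + 1) * Real.ofDigits fun i => a (i + 1) := by
      rw [pow_succ, mul_assoc, hstep]
      push_cast
      ring
    rw [hsplit, Int.floor_intCast_add, Int.mul_add_emod_self_left,
      ih (a := fun i => a (i + 1)) (two_mul_ofDigits _) i (by omega) hi]

/- A vanishing digit below `k` is needed: a series whose digits are all `1` from some point on is
a dyadic rational, and `digit` reads the terminating expansion. -/
lemma digit_tsum {a : ℤ → ℤ} (ha : ∀ n, a n = 0 ∨ a n = 1) {M k l : ℤ}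
    (hM : ∀ n, M ≤ n → a n = 0) (hlk : l < k) (hl : a l = 0) :
    digit k (∑' n : ℤ, (a n : ℝ) * 2 ^ n) = a k := by
  wlog hkM : k < M generalizing M
  · exact this (M := k + 1) (fun n hn => hM n (by omega)) (by omega)
  obtain ⟨d, hd⟩ : ∃ d : ℤ → Fin 2, ∀ n, a n = (d n : ℕ) :=
    ⟨fun n => if a n = 0 then 0 else 1, fun n => by rcases ha n with h | h <;> simp [h]⟩
  obtain ⟨j, hj⟩ : ∃ j : ℕ, k = M - 1 - j := ⟨(M - 1 - k).toNat, by omega⟩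
  obtain ⟨i, hi⟩ : ∃ i : ℕ, l = M - 1 - i := ⟨(M - 1 - l).toNat, by omega⟩
  have hinj : Function.Injective fun i : ℕ => M - 1 - (i : ℤ) := fun i j h => by
    simpa using h
  have hsupp : Function.support (fun n : ℤ => (a n : ℝ) * 2 ^ n)
      ⊆ range fun i : ℕ => M - 1 - (i : ℤ) := fun n hn =>
    have hnM : n < M := by
      by_contra h
      exact hn (by simp [hM n (not_lt.1 h)])
    ⟨(M - 1 - n).toNat, by simp only; omega⟩
  have hterm (i : ℕ) : (a (M - 1 - i) : ℝ) * 2 ^ (M - 1 - i : ℤ)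
      = 2 ^ M * Real.ofDigitsTerm (fun i : ℕ => d (M - 1 - i)) i := by
    rw [hd, Real.ofDigitsTerm, sub_sub, zpow_sub₀ two_ne_zero, ← Nat.cast_one (R := ℤ),
      ← Nat.cast_add, zpow_natCast, add_comm 1 i]
    push_cast
    ring
  have hsum : (∑' n : ℤ, (a n : ℝ) * 2 ^ n) / 2 ^ k
      = 2 ^ (j + 1) * Real.ofDigits fun i : ℕ => d (M - 1 - i) := by
    rw [← hinj.tsum_eq hsupp, tsum_congr hterm, tsum_mul_left, ← Real.ofDigits, hj, sub_sub,
      zpow_sub₀ two_ne_zero, ← Nat.cast_one (R := ℤ), ← Nat.cast_add, zpow_natCast, add_comm 1 j]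
    field_simp
  rw [digit, hsum, floor_two_pow_mul_ofDigits_emod_two (i := i) (by omega), ← hj, hd]
  exact Fin.ext (Int.natCast_eq_zero.1 (by rw [← hd, ← hi, hl]))

end DigitsOfSeries

section BitwiseProduct

lemma wMulDigit_eq_zero_or_one (n : ℤ) (x y : ℝ) : wMulDigit n x y = 0 ∨ wMulDigit n x y = 1 :=
  Int.emod_two_eq_zero_or_one _

lemma wMulDigit_eq_sum {n : ℤ} {x y : ℝ} {S : Finset ℤ}
    (hS : ∀ m ∉ S, digit (n - m) x * digit m y = 0) :
    wMulDigit n x y = (∑ m ∈ S, digit (n - m) x * digit m y) % 2 := by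
  rw [wMulDigit, tsum_eq_sum (s := S) fun m hm => by rw [hS m hm, Int.cast_zero],
    ← Int.cast_sum, Int.floor_intCast]

lemma wMulDigit_comm (n : ℤ) (x y : ℝ) : wMulDigit n x y = wMulDigit n y x := by
  rw [wMulDigit, wMulDigit, ← (Equiv.subLeft n).tsum_eq]
  simp only [Equiv.subLeft_apply, sub_sub_cancel, mul_comm]

variable {x y ξ : ℝ} {k l n : ℤ}

lemma wMulDigit_eq_zero_of_le (hx0 : 0 ≤ x) (hx : x < 2 ^ k) (hy0 : 0 ≤ y) (hy : y < 2 ^ l)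
    (hn : k + l ≤ n) : wMulDigit n x y = 0 := by
  refine (wMulDigit_eq_sum (S := ∅) fun m _ => ?_).trans (by simp)
  rcases le_or_gt l m with h | h
  · rw [digit_eq_zero_of_lt hy0 hy h, mul_zero]
  · rw [digit_eq_zero_of_lt hx0 hx (by omega), zero_mul]

lemma wMulDigit_add_eq {t R : ℤ} (hξ : ξ ∈ Ico ((2 : ℝ) ^ t) (2 ^ (t + 1))) (hx0 : 0 ≤ x)
    (hx : x < 2 ^ R) :
    wMulDigit (k + t) ξ x
      = (digit k x + ∑ m ∈ Finset.Ioc k R, digit (k + t - m) ξ * digit m x) % 2 := by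
  rw [wMulDigit_eq_sum (S := insert k (Finset.Ioc k R)), Finset.sum_insert (by simp),
    add_sub_cancel_left, digit_eq_one_of_mem_Ico hξ, one_mul]
  intro m hm
  simp only [Finset.mem_insert, Finset.mem_Ioc, not_or, not_and, not_le] at hm
  have hξ0 : (0 : ℝ) ≤ 2 ^ t := by positivity
  rcases lt_or_ge m k with h | h
  · rw [digit_eq_zero_of_lt (hξ0.trans hξ.1) hξ.2 (by omega), zero_mul]
  · rw [digit_eq_zero_of_lt hx0 hx (hm.2 (by omega)).le, mul_zero]

/- The product digit at `k + t` involves the `k`-th digit through the leading digit of `ξ` only, so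
the digits of `x` can be recovered from the top down. -/
lemma digit_eq_of_wMulDigit_eq {t : ℤ} (hξ : ξ ∈ Ico ((2 : ℝ) ^ t) (2 ^ (t + 1))) (hx : 0 ≤ x)
    (hy : 0 ≤ y) (h : ∀ m, k < m → digit m x = digit m y)
    (hw : wMulDigit (k + t) ξ x = wMulDigit (k + t) ξ y) : digit k x = digit k y := by
  obtain ⟨R, hR⟩ := pow_unbounded_of_one_lt (max x y) (one_lt_two (α := ℝ))
  rw [wMulDigit_add_eq (R := R) hξ hx (by simpa using (le_max_left x y).trans_lt hR),
    wMulDigit_add_eq (R := R) hξ hy (by simpa using (le_max_right x y).trans_lt hR),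
    Finset.sum_congr rfl fun m hm => by rw [h m (Finset.mem_Ioc.1 hm).1]] at hw
  rcases digit_eq_zero_or_one k x with h1 | h1 <;> rcases digit_eq_zero_or_one k y with h2 | h2 <;>
    omega

lemma countable_setOf_wMulDigit_eq_one (hξ : 0 < ξ) (N : ℤ) :
    {x : ℝ | 0 ≤ x ∧ ∀ n ≤ N, wMulDigit n ξ x = 1}.Countable := by
  obtain ⟨t, ht⟩ : ∃ t : ℤ, ξ ∈ Ico ((2 : ℝ) ^ t) (2 ^ (t + 1)) :=
    ⟨Int.log 2 ξ, by exact_mod_cast Int.zpow_log_le_self one_lt_two hξ,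
      by exact_mod_cast Int.lt_zpow_succ_log_self one_lt_two ξ⟩
  refine countable_of_injective_of_countable_image (f := fun x : ℝ => ⌊x / 2 ^ (N - t + 1)⌋) ?_
    (to_countable _)
  rintro x ⟨hx0, hx⟩ y ⟨hy0, hy⟩ hxy
  refine eq_of_forall_floor_eq (m := N - t + 1) fun j => ?_
  induction j with
  | zero => simpa using hxy
  | succ j ih =>
    obtain ⟨k, hk⟩ : ∃ k, k = N - t + 1 - ((j + 1 : ℕ) : ℤ) := ⟨_, rfl⟩
    have hk1 : N - t + 1 - (j : ℤ) = k + 1 := by push_cast at hk; omega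
    have hkt : k + t ≤ N := by push_cast at hk; omega
    rw [hk1] at ih
    rw [← hk, floor_div_zpow_eq_two_mul_add_digit x, floor_div_zpow_eq_two_mul_add_digit y, ih,
      digit_eq_of_wMulDigit_eq ht hx0 hy0 (fun m hm => digit_eq_of_floor_eq ih hm)
        ((hx _ hkt).trans (hy _ hkt).symm)]

end BitwiseProduct

section WalshSign

/-- The Walsh kernel `(-1)^{d₋₁(ξ ⊗ x)}`, with the digit of the product taken before carrying: it is
everywhere symmetric and agrees with `e(ξ ⊗ x)` unless the digits of `ξ ⊗ x` end in a tail of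
`1`s. -/
def walshSign (ξ x : ℝ) : ℝ := (-1) ^ wMulDigit (-1) ξ x

lemma walshSign_comm (ξ x : ℝ) : walshSign ξ x = walshSign x ξ := by
  rw [walshSign, wMulDigit_comm, walshSign]

lemma abs_walshSign (ξ x : ℝ) : |walshSign ξ x| = 1 := by
  rw [walshSign, abs_neg_one_zpow]

lemma walshe_wMul_of_wMulDigit_eq_zero {ξ x : ℝ} (hξ : 0 ≤ ξ) (hx : 0 ≤ x) {l : ℤ} (hl : l < -1)
    (h : wMulDigit l ξ x = 0) : walshe (wMul ξ x) = walshSign ξ x := by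
  obtain ⟨K, hK⟩ := pow_unbounded_of_one_lt ξ (one_lt_two (α := ℝ))
  obtain ⟨L, hL⟩ := pow_unbounded_of_one_lt x (one_lt_two (α := ℝ))
  rw [walshe, walshSign, wMul, digit_tsum (wMulDigit_eq_zero_or_one · ξ x) (M := K + L)
    (fun n hn => wMulDigit_eq_zero_of_le hξ (by simpa using hK) hx (by simpa using hL) hn) hl h]

lemma walshe_wMul_ae {ξ : ℝ} (hξ : 0 ≤ ξ) :
    ∀ᵐ x ∂μplus, walshe (wMul ξ x) = walshSign ξ x := by
  rw [μplus, ae_restrict_iff' measurableSet_Ici]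
  rcases hξ.eq_or_lt with rfl | hpos
  · refine .of_forall fun x hx => walshe_wMul_of_wMulDigit_eq_zero le_rfl hx (l := -2) (by simp) ?_
    rw [wMulDigit_eq_sum (S := ∅) (by simp [digit])]
    rfl
  · filter_upwards [(countable_setOf_wMulDigit_eq_one hpos (-2)).ae_notMem volume] with x hx hx0
    obtain ⟨n, hn, hne⟩ : ∃ n ≤ -2, wMulDigit n ξ x ≠ 1 := by
      by_contra! hcon
      exact hx ⟨hx0, hcon⟩
    exact walshe_wMul_of_wMulDigit_eq_zero hξ hx0 (by omega)
      ((wMulDigit_eq_zero_or_one n ξ x).resolve_right hne)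

lemma walshFT_eq_integral_walshSign (f : ℝ → ℝ) {ξ : ℝ} (hξ : 0 ≤ ξ) :
    walshFT f ξ = ∫ x, walshSign ξ x * f x ∂μplus :=
  integral_congr_ae <| (walshe_wMul_ae hξ).mono fun x hx => by simp only [hx]

end WalshSign

/-! ### Discretization of the Walsh kernel -/

namespace WalshGroup

section Bits

variable {n : ℕ}

/-- The last `n` binary digits of `j`, listed from the least significant one: the position on the
space side of the `j`-th dyadic cell. -/
def lowBits (n j : ℕ) : WalshGroup (Fin n) := fun i => ⟨j / 2 ^ (i : ℕ) % 2, Nat.mod_lt _ two_pos⟩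

/-- The last `n` binary digits of `j`, listed from the most significant one: the position on the
frequency side of the `j`-th dyadic cell. -/
def highBits (n j : ℕ) : WalshGroup (Fin n) := lowBits n j ∘ Fin.rev

/-- The number below `2^n` with the given `lowBits`. -/
def ofLowBits (x : WalshGroup (Fin n)) : ℕ := finFunctionFinEquiv x

/-- The number below `2^n` with the given `highBits`. -/
def ofHighBits (ξ : WalshGroup (Fin n)) : ℕ := ofLowBits (ξ ∘ Fin.rev)

lemma ofHighBits_lt (ξ : WalshGroup (Fin n)) : ofHighBits ξ < 2 ^ n := (finFunctionFinEquiv _).isLt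

lemma lowBits_ofLowBits (x : WalshGroup (Fin n)) : lowBits n (ofLowBits x) = x :=
  finFunctionFinEquiv.symm_apply_apply x

lemma ofLowBits_lowBits {j : ℕ} (hj : j < 2 ^ n) : ofLowBits (lowBits n j) = j :=
  congrArg Fin.val (finFunctionFinEquiv.apply_symm_apply ⟨j, hj⟩)

lemma highBits_ofHighBits (ξ : WalshGroup (Fin n)) : highBits n (ofHighBits ξ) = ξ := by
  funext i
  simp [highBits, ofHighBits, lowBits_ofLowBits]

lemma ofHighBits_highBits {c : ℕ} (hc : c < 2 ^ n) : ofHighBits (highBits n c) = c := by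
  rw [ofHighBits, highBits, Function.comp_assoc, Fin.rev_involutive.comp_self, Function.comp_id,
    ofLowBits_lowBits hc]

lemma sum_range_lowBits {M : Type*} [AddCommMonoid M] (F : WalshGroup (Fin n) → M) :
    ∑ j ∈ Finset.range (2 ^ n), F (lowBits n j) = ∑ x, F x := by
  rw [Finset.sum_range]
  exact finFunctionFinEquiv.symm.sum_comp F

lemma sum_range_highBits {M : Type*} [AddCommMonoid M] (F : WalshGroup (Fin n) → M) :
    ∑ c ∈ Finset.range (2 ^ n), F (highBits n c) = ∑ ξ, F ξ :=
  (sum_range_lowBits fun x => F (x ∘ Fin.rev)).trans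
    ((Equiv.arrowCongr Fin.revPerm (Equiv.refl (Fin 2))).sum_comp F)

lemma lowBits_apply_eq_iff {c e : ℕ} {i : Fin n} :
    lowBits n c i = lowBits n e i ↔ c.testBit i = e.testBit i := by
  rw [lowBits, lowBits, Fin.mk.injEq, Nat.testBit_eq_decide_div_mod_eq,
    Nat.testBit_eq_decide_div_mod_eq, decide_eq_decide]
  omega

lemma highBits_mem_freqInterval {c e s : ℕ} (h : e / 2 ^ (n - s) = c / 2 ^ (n - s)) :
    highBits n e ∈ freqInterval s (highBits n c) := by
  refine mem_subcube.2 fun i hi => lowBits_apply_eq_iff.2 ?_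
  have hi : i.val < s := hi
  have hpos : n - s ≤ (Fin.rev i : ℕ) := by rw [Fin.val_rev]; omega
  rw [← Nat.sub_add_cancel hpos, ← Nat.testBit_div_two_pow, ← Nat.testBit_div_two_pow, h]

lemma div_eq_of_highBits_mem_freqInterval {c e s : ℕ} (hc : c < 2 ^ n) (he : e < 2 ^ n)
    (h : highBits n e ∈ freqInterval s (highBits n c)) :
    e / 2 ^ (n - s) = c / 2 ^ (n - s) := by
  refine Nat.eq_of_testBit_eq fun k => ?_
  rw [Nat.testBit_div_two_pow, Nat.testBit_div_two_pow]
  rcases lt_or_ge (k + (n - s)) n with hk | hk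
  · have hrev : (Fin.rev ⟨k + (n - s), hk⟩ : ℕ) < s := by rw [Fin.val_rev]; simp only; omega
    simpa using lowBits_apply_eq_iff.1 (mem_subcube.1 h (Fin.rev ⟨k + (n - s), hk⟩) hrev)
  · have hle := Nat.pow_le_pow_right two_pos hk
    rw [Nat.testBit_lt_two_pow (he.trans_le hle), Nat.testBit_lt_two_pow (hc.trans_le hle)]

/-- The sequence `a` is constant on each dyadic block of indices below `M` that contains no element
of `X`; the blocks of length `2^p` are the fibres of `c ↦ c / 2^p`. -/
def DyadicallyConstantOff (X : Finset ℕ) (M : ℕ) (a : ℕ → ℝ) : Prop :=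
  ∀ p c c', c < M → c' < M → c / 2 ^ p = c' / 2 ^ p → (∀ e ∈ X, e / 2 ^ p ≠ c / 2 ^ p) → a c = a c'

lemma constantOff_of_dyadicallyConstantOff {X : Finset ℕ} {a : ℕ → ℝ}
    (h : DyadicallyConstantOff X (2 ^ n) a) :
    ConstantOff (n := n) (a ∘ ofHighBits) (X.image (highBits n)) := by
  intro s ξ η hη hX
  refine (h (n - s) _ _ (ofHighBits_lt ξ) (ofHighBits_lt η) ?_ fun e he heq => ?_).symm
  · rw [← highBits_ofHighBits ξ, ← highBits_ofHighBits η] at hη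
    exact (div_eq_of_highBits_mem_freqInterval (ofHighBits_lt ξ) (ofHighBits_lt η) hη).symm
  · refine hX _ (Finset.mem_image_of_mem _ he) ?_
    simpa only [highBits_ofHighBits] using highBits_mem_freqInterval heq

lemma two_pow_mul_multiplierOp_apply (a γ : ℕ → ℝ) (x : WalshGroup (Fin n)) :
    2 ^ n * multiplierOp (a ∘ ofHighBits) (γ ∘ ofLowBits) x
      = ∑ c ∈ Finset.range (2 ^ n), walshChar x (highBits n c) *
          (a c * ∑ i ∈ Finset.range (2 ^ n), walshChar (highBits n c) (lowBits n i) * γ i) := by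
  have hinner (ξ : WalshGroup (Fin n)) :
      ∑ i ∈ Finset.range (2 ^ n), walshChar ξ (lowBits n i) * γ i
        = transform (γ ∘ ofLowBits) ξ := by
    rw [transform_apply, ← sum_range_lowBits]
    refine Finset.sum_congr rfl fun i hi => ?_
    rw [Function.comp_apply, ofLowBits_lowBits (Finset.mem_range.1 hi)]
  simp only [hinner]
  rw [multiplierOp_apply, Pi.smul_apply, smul_eq_mul, Fintype.card_fin,
    mul_inv_cancel_left₀ (by positivity), transform_apply, ← sum_range_highBits]
  refine Finset.sum_congr rfl fun c hc => ?_
  rw [Pi.mul_apply, Function.comp_apply, ofHighBits_highBits (Finset.mem_range.1 hc)]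

end Bits

lemma walshSign_eq_walshChar {K L : ℕ} {ξ x : ℝ} (hξ : ξ ∈ Ico 0 ((2 : ℝ) ^ K))
    (hx : x ∈ Ico 0 ((2 : ℝ) ^ L)) :
    walshSign ξ x
      = walshChar (highBits (K + L) ⌊ξ * 2 ^ L⌋₊) (lowBits (K + L) ⌊x * 2 ^ K⌋₊) := by
  have hinj : Function.Injective fun i : Fin (K + L) => -(K : ℤ) + (i : ℕ) := fun i j h => by
    simpa [Fin.val_inj] using h
  have hsum : wMulDigit (-1) ξ x = ((∑ i : Fin (K + L),
      (highBits (K + L) ⌊ξ * 2 ^ L⌋₊ i : ℕ) * (lowBits (K + L) ⌊x * 2 ^ K⌋₊ i : ℕ) :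
        ℕ) : ℤ) % 2 := by
    rw [wMulDigit_eq_sum (S := Finset.univ.image fun i : Fin (K + L) => -(K : ℤ) + (i : ℕ)),
      Finset.sum_image hinj.injOn, Nat.cast_sum]
    · refine congrArg (· % 2) (Finset.sum_congr rfl fun i _ => ?_)
      have hi : -1 - (-(K : ℤ) + (i : ℕ)) = -(L : ℤ) + (Fin.rev i : ℕ) := by
        rw [Fin.val_rev]
        omega
      rw [hi, digit_neg_add_natCast hξ.1, digit_neg_add_natCast hx.1, ← Nat.cast_mul]
      rfl
    · intro m hm
      rcases le_or_gt (L : ℤ) m with h | h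
      · rw [digit_eq_zero_of_lt hx.1 (by exact_mod_cast hx.2) h, mul_zero]
      · have hmK : (K : ℤ) ≤ -1 - m := by
          by_contra hlt
          exact hm (Finset.mem_image.2 ⟨⟨(m + K).toNat, by omega⟩, Finset.mem_univ _,
            by simp only; omega⟩)
        rw [digit_eq_zero_of_lt hξ.1 (by exact_mod_cast hξ.2) hmK, zero_mul]
  rw [walshSign, hsum, walshChar, Finset.prod_pow_eq_pow_sum, neg_one_pow_eq_pow_mod_two]
  exact_mod_cast rfl

section RescaledBound

variable {n N : ℕ} {q C B : ℝ} {m : WalshGroup (Fin n) → ℝ} {Ξ : Finset (WalshGroup (Fin n))}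

lemma ConstantOff.smul (hm : ConstantOff m Ξ) (c : ℝ) : ConstantOff (c • m) Ξ :=
  fun s ξ η hη hξ => by rw [Pi.smul_apply, Pi.smul_apply, hm s ξ η hη hξ]

lemma IsMultiplierConstant.Lp_le (hC : IsMultiplierConstant q C) (hm : ConstantOff m Ξ)
    (hB : ∀ ξ, |m ξ| ≤ B) (hN : 1 ≤ N) (hΞ : Ξ.card ≤ N) (f : WalshGroup (Fin n) → ℝ) :
    (∑ x, |multiplierOp m f x| ^ q) ^ (1 / q)
      ≤ C * N ^ |1 / q - 1 / 2| * (∑ x, |(B • f) x| ^ q) ^ (1 / q) := by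
  have hB0 : 0 ≤ B := (abs_nonneg _).trans (hB 0)
  have hm1 (ξ : WalshGroup (Fin n)) : |(B⁻¹ • m) ξ| ≤ 1 := by
    rw [Pi.smul_apply, smul_eq_mul, abs_mul, abs_inv, abs_of_nonneg hB0]
    exact inv_mul_le_one_of_le₀ (hB ξ) hB0
  have hmB : multiplierOp m f = multiplierOp (B⁻¹ • m) (B • f) := by
    rcases hB0.eq_or_lt with rfl | hpos
    · have hm0 : m = 0 := funext fun ξ => abs_nonpos_iff.1 (hB ξ)
      rw [inv_zero, zero_smul, zero_smul, map_zero, hm0]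
      simpa using multiplierOp_smul 0 (0 : WalshGroup (Fin n) → ℝ) f
    · rw [map_smul, multiplierOp_smul, smul_inv_smul₀ hpos.ne']
  have hpow : (√N : ℝ) ^ (2 * |1 / q - 1 / 2|) = N ^ |1 / q - 1 / 2| := by
    rw [Real.rpow_mul (Real.sqrt_nonneg _), Real.rpow_two, Real.sq_sqrt N.cast_nonneg]
  rw [hmB, ← hpow]
  exact hC n _ Ξ (hm.smul _) hm1 _ (Real.one_le_sqrt.2 (by exact_mod_cast hN))
    (by rw [Real.sq_sqrt N.cast_nonneg]; exact_mod_cast hΞ) _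

lemma sum_enorm_rpow {α : Type*} [Fintype α] (hq : 0 < q) (f : α → ℝ) :
    ∑ x, ‖f x‖ₑ ^ q = ENNReal.ofReal ((∑ x, |f x| ^ q) ^ (1 / q)) ^ q := by
  rw [ENNReal.ofReal_rpow_of_nonneg (by positivity) hq.le, ← Real.rpow_mul (by positivity),
    one_div_mul_cancel hq.ne', Real.rpow_one, ENNReal.ofReal_sum_of_nonneg fun _ _ => by positivity]
  simp only [Real.enorm_eq_ofReal_abs, ENNReal.ofReal_rpow_of_nonneg (abs_nonneg _) hq.le]

lemma IsMultiplierConstant.sum_enorm_rpow_le (hq : 0 < q) (hC0 : 0 ≤ C)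
    (hC : IsMultiplierConstant q C) (hm : ConstantOff m Ξ) (hB : ∀ ξ, |m ξ| ≤ B) (hN : 1 ≤ N)
    (hΞ : Ξ.card ≤ N) (f : WalshGroup (Fin n) → ℝ) :
    ∑ x, ‖multiplierOp m f x‖ₑ ^ q
      ≤ ENNReal.ofReal (C * N ^ |1 / q - 1 / 2| * B) ^ q * ∑ x, ‖f x‖ₑ ^ q := by
  have hB0 : 0 ≤ B := (abs_nonneg _).trans (hB 0)
  calc ∑ x, ‖multiplierOp m f x‖ₑ ^ q
      = ENNReal.ofReal ((∑ x, |multiplierOp m f x| ^ q) ^ (1 / q)) ^ q := sum_enorm_rpow hq _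
    _ ≤ (ENNReal.ofReal (C * N ^ |1 / q - 1 / 2|) *
          ENNReal.ofReal ((∑ x, |(B • f) x| ^ q) ^ (1 / q))) ^ q := by
        rw [← ENNReal.ofReal_mul (by positivity)]
        gcongr
        exact hC.Lp_le hm hB hN hΞ f
    _ = ENNReal.ofReal (C * N ^ |1 / q - 1 / 2|) ^ q * ∑ x, ‖(B • f) x‖ₑ ^ q := by
        rw [ENNReal.mul_rpow_of_nonneg _ _ hq.le, ← sum_enorm_rpow hq]
    _ = ENNReal.ofReal (C * N ^ |1 / q - 1 / 2| * B) ^ q * ∑ x, ‖f x‖ₑ ^ q := by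
        simp only [Pi.smul_apply, smul_eq_mul, enorm_mul, ENNReal.mul_rpow_of_nonneg _ _ hq.le]
        rw [← Finset.mul_sum, ← mul_assoc, Real.enorm_of_nonneg hB0,
          ENNReal.ofReal_mul (q := B) (by positivity), ENNReal.mul_rpow_of_nonneg _ _ hq.le]

end RescaledBound

end WalshGroup

/-! ### Dyadic cells -/

/-- The `j`-th dyadic interval of length `2^(-K)` on the half-line. -/
def dyadicCell (K j : ℕ) : Set ℝ := Ico ((j : ℝ) / 2 ^ K) (((j : ℝ) + 1) / 2 ^ K)

section DyadicCells

variable {K L i j : ℕ} {x y : ℝ}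

lemma mem_dyadicCell : x ∈ dyadicCell K j ↔ 0 ≤ x ∧ ⌊x * 2 ^ K⌋₊ = j := by
  have hK : (0 : ℝ) < 2 ^ K := by positivity
  rw [dyadicCell, mem_Ico, div_le_iff₀ hK, lt_div_iff₀ hK]
  refine ⟨fun h => ?_, fun h => (Nat.floor_eq_iff (by have := h.1; positivity)).1 h.2⟩
  have hx : 0 ≤ x := nonneg_of_mul_nonneg_left ((Nat.cast_nonneg j).trans h.1) hK
  exact ⟨hx, (Nat.floor_eq_iff (by positivity)).2 h⟩

lemma measurableSet_dyadicCell : MeasurableSet (dyadicCell K j) := measurableSet_Ico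

lemma volume_dyadicCell : volume (dyadicCell K j) = ENNReal.ofReal (2 ^ K)⁻¹ := by
  rw [dyadicCell, Real.volume_Ico, ← sub_div, add_sub_cancel_left, one_div]

lemma volume_dyadicCell_lt_top : volume (dyadicCell K j) < ∞ := by
  rw [volume_dyadicCell]
  exact ENNReal.ofReal_lt_top

lemma biUnion_dyadicCell (K L : ℕ) :
    ⋃ j ∈ Finset.range (2 ^ (K + L)), dyadicCell K j = Ico 0 ((2 : ℝ) ^ L) := by
  ext x
  have hlt (hx : 0 ≤ x) : ⌊x * 2 ^ K⌋₊ < 2 ^ (K + L) ↔ x < 2 ^ L := by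
    rw [Nat.floor_lt (by positivity), Nat.cast_pow, Nat.cast_ofNat, pow_add, mul_comm,
      mul_lt_mul_iff_right₀ (by positivity)]
  simp only [mem_iUnion, Finset.mem_range, mem_dyadicCell, exists_prop, exists_eq_right_right',
    mem_Ico]
  exact and_comm.trans (and_congr_right hlt)

lemma pairwiseDisjoint_dyadicCell (S : Set ℕ) : S.PairwiseDisjoint (dyadicCell K) :=
  fun _ _ _ _ hij => disjoint_left.2 fun _ hi hj =>
    hij ((mem_dyadicCell.1 hi).2.symm.trans (mem_dyadicCell.1 hj).2)

lemma lt_of_mem_dyadicCell (hij : i < j) (hx : x ∈ dyadicCell K i) (hy : y ∈ dyadicCell K j) :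
    x < y := by
  have hcast : (i : ℝ) + 1 ≤ j := by exact_mod_cast hij
  calc x < (i + 1) / 2 ^ K := hx.2
    _ ≤ j / 2 ^ K := by gcongr
    _ ≤ y := hy.1

variable {φ : ℕ → ℝ} {h : ℝ → ℝ}

lemma integrableOn_floor_mul (hh : IntegrableOn h (Ico 0 (2 ^ L))) :
    IntegrableOn (fun y => φ ⌊y * 2 ^ K⌋₊ * h y) (Ico 0 (2 ^ L)) := by
  rw [← biUnion_dyadicCell K L, integrableOn_finset_iUnion] at hh ⊢
  exact fun j hj => IntegrableOn.congr_fun ((hh j hj).const_mul (φ j))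
    (fun y hy => by rw [(mem_dyadicCell.1 hy).2]) measurableSet_dyadicCell

lemma setIntegral_floor_mul (hh : IntegrableOn h (Ico 0 (2 ^ L))) :
    ∫ y in Ico 0 (2 ^ L), φ ⌊y * 2 ^ K⌋₊ * h y
      = ∑ j ∈ Finset.range (2 ^ (K + L)), φ j * ∫ y in dyadicCell K j, h y := by
  have hφh := integrableOn_floor_mul (K := K) (φ := φ) hh
  rw [← biUnion_dyadicCell K L, integrableOn_finset_iUnion] at hφh
  rw [← biUnion_dyadicCell K L, integral_biUnion_finset _ (fun j _ => measurableSet_dyadicCell)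
    (pairwiseDisjoint_dyadicCell _) hφh]
  refine Finset.sum_congr rfl fun j _ => ?_
  rw [← integral_const_mul]
  exact setIntegral_congr_fun measurableSet_dyadicCell fun y hy => by
    rw [(mem_dyadicCell.1 hy).2]

lemma setLIntegral_eq_sum_dyadicCell (K L : ℕ) (F : ℝ → ℝ≥0∞) :
    ∫⁻ x in Ico 0 (2 ^ L), F x
      = ∑ j ∈ Finset.range (2 ^ (K + L)), ∫⁻ x in dyadicCell K j, F x := by
  rw [← biUnion_dyadicCell K L, lintegral_biUnion_finset (pairwiseDisjoint_dyadicCell _)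
    (fun j _ => measurableSet_dyadicCell)]

lemma setLIntegral_floor (ψ : ℕ → ℝ≥0∞) :
    ∫⁻ x in Ico (0 : ℝ) (2 ^ L), ψ ⌊x * 2 ^ K⌋₊
      = ENNReal.ofReal (2 ^ K)⁻¹ * ∑ j ∈ Finset.range (2 ^ (K + L)), ψ j := by
  rw [setLIntegral_eq_sum_dyadicCell K L, Finset.mul_sum]
  refine Finset.sum_congr rfl fun j _ => ?_
  rw [setLIntegral_congr_fun measurableSet_dyadicCell (g := fun _ => ψ j) fun x hx => by
    simp only [(mem_dyadicCell.1 hx).2], setLIntegral_const, volume_dyadicCell, mul_comm]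

end DyadicCells

lemma enorm_setIntegral_rpow_le {α E : Type*} [MeasurableSpace α] [NormedAddCommGroup E]
    [NormedSpace ℝ E] {μ : Measure α} {s : Set α} {f : α → E} {q : ℝ} (hq : 1 ≤ q)
    (hf : AEStronglyMeasurable f (μ.restrict s)) :
    ‖∫ x in s, f x ∂μ‖ₑ ^ q ≤ μ s ^ (q - 1) * ∫⁻ x in s, ‖f x‖ₑ ^ q ∂μ := by
  have hq0 : 0 < q := one_pos.trans_le hq
  have hHolder := eLpNorm_le_eLpNorm_mul_rpow_measure_univ (p := 1) (q := ENNReal.ofReal q)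
    (ENNReal.one_le_ofReal.2 hq) hf
  rw [eLpNorm_one_eq_lintegral_enorm, Measure.restrict_apply_univ, ENNReal.toReal_one, one_div_one,
    eLpNorm_eq_lintegral_rpow_enorm_toReal (by simpa using hq0) ENNReal.ofReal_ne_top,
    ENNReal.toReal_ofReal hq0.le] at hHolder
  have exponent : (1 - 1 / q) * q = q - 1 := by field_simp
  calc ‖∫ x in s, f x ∂μ‖ₑ ^ q
      ≤ ((∫⁻ x in s, ‖f x‖ₑ ^ q ∂μ) ^ (1 / q) * μ s ^ (1 - 1 / q)) ^ q := by
        gcongr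
        exact (enorm_integral_le_lintegral_enorm _).trans hHolder
    _ = μ s ^ (q - 1) * ∫⁻ x in s, ‖f x‖ₑ ^ q ∂μ := by
        rw [ENNReal.mul_rpow_of_nonneg _ _ hq0.le, ← ENNReal.rpow_mul, ← ENNReal.rpow_mul,
          one_div_mul_cancel hq0.ne', ENNReal.rpow_one, exponent, mul_comm]

/-! ### Multiplier operators on the half-line -/

section HalfLine

open WalshGroup

/-- The Walsh multiplier operator `g ↦ (m ĝ)ˇ` on the half-line. -/
def walshMultiplier (m g : ℝ → ℝ) : ℝ → ℝ := walshFT fun ξ => m ξ * walshFT g ξ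

/-- The integral of `f` over the `j`-th dyadic interval of length `2^(-K)`. -/
def cellIntegral (K : ℕ) (f : ℝ → ℝ) (j : ℕ) : ℝ := ∫ x in dyadicCell K j, f x

variable {m g f : ℝ → ℝ} {K L : ℕ} {ξ x q C B : ℝ}

lemma iUnion_Ico_two_pow : ⋃ K : ℕ, Ico (0 : ℝ) (2 ^ K) = Ici 0 := by
  ext x
  simp only [mem_iUnion, mem_Ico, exists_and_left, mem_Ici, and_iff_left_iff_imp]
  exact fun _ => pow_unbounded_of_one_lt x one_lt_two

lemma measurable_comp_floor (L : ℕ) (φ : ℕ → ℝ) : Measurable fun x : ℝ => φ ⌊x * 2 ^ L⌋₊ :=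
  measurable_from_top.comp (Nat.measurable_floor.comp (measurable_id.mul_const _))

lemma aestronglyMeasurable_of_eq_floor (L : ℕ) (φ : ℕ → ℕ → ℝ)
    (h : ∀ K, ∀ x ∈ Ico (0 : ℝ) (2 ^ K), f x = φ K ⌊x * 2 ^ L⌋₊) :
    AEStronglyMeasurable f μplus := by
  rw [μplus, ← iUnion_Ico_two_pow, aestronglyMeasurable_iUnion_iff]
  exact fun K => (measurable_comp_floor L (φ K)).aestronglyMeasurable.congr
    ((ae_restrict_mem measurableSet_Ico).mono fun x hx => (h K x hx).symm)

lemma aestronglyMeasurable_walshSign (hξ : 0 ≤ ξ) :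
    AEStronglyMeasurable (walshSign ξ) μplus := by
  obtain ⟨K, hK⟩ := pow_unbounded_of_one_lt ξ (one_lt_two (α := ℝ))
  exact aestronglyMeasurable_of_eq_floor K
    (fun L j => walshChar (highBits (K + L) ⌊ξ * 2 ^ L⌋₊) (lowBits (K + L) j))
    fun L x hx => walshSign_eq_walshChar ⟨hξ, hK⟩ hx

lemma integrable_walshSign_mul_iff (hξ : 0 ≤ ξ) :
    Integrable (fun x => walshSign ξ x * f x) μplus ↔ Integrable f μplus := by
  have hmul {h : ℝ → ℝ} (hh : Integrable h μplus) :
      Integrable (fun x => walshSign ξ x * h x) μplus :=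
    hh.bdd_mul (c := 1) (aestronglyMeasurable_walshSign hξ)
      (.of_forall fun x => (abs_walshSign ξ x).le)
  refine ⟨fun h => (hmul h).congr (.of_forall fun x => ?_), hmul⟩
  simp only
  rw [← mul_assoc, ← abs_mul_abs_self, abs_walshSign, one_mul, one_mul]

lemma walshFT_of_not_integrable (hf : ¬ Integrable f μplus) (hξ : 0 ≤ ξ) : walshFT f ξ = 0 := by
  rw [walshFT_eq_integral_walshSign f hξ,
    integral_undef fun h => hf ((integrable_walshSign_mul_iff hξ).1 h)]

lemma abs_walshFT_le (f : ℝ → ℝ) (hξ : 0 ≤ ξ) : |walshFT f ξ| ≤ ∫ x, |f x| ∂μplus := by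
  rw [walshFT_eq_integral_walshSign f hξ]
  refine abs_integral_le_integral_abs.trans_eq ?_
  simp only [abs_mul, abs_walshSign, one_mul]

lemma walshFT_indicator_eq_setIntegral (f : ℝ → ℝ) (hξ : 0 ≤ ξ) :
    walshFT ((Ico 0 (2 ^ K)).indicator f) ξ = ∫ x in Ico 0 (2 ^ K), walshSign ξ x * f x := by
  rw [walshFT_eq_integral_walshSign _ hξ]
  simp only [← indicator_mul_right]
  rw [integral_indicator measurableSet_Ico, μplus, Measure.restrict_restrict measurableSet_Ico,
    inter_eq_self_of_subset_left Ico_subset_Ici_self]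

lemma tendsto_walshFT_indicator (hf : Integrable f μplus) (hξ : 0 ≤ ξ) :
    Tendsto (fun K : ℕ => walshFT ((Ico 0 (2 ^ K)).indicator f) ξ) atTop (nhds (walshFT f ξ)) := by
  have hlim := tendsto_setIntegral_of_monotone (s := fun K : ℕ => Ico (0 : ℝ) (2 ^ K))
    (fun _ => measurableSet_Ico)
    (fun _ _ h => Ico_subset_Ico_right (pow_le_pow_right₀ one_le_two h))
    (by rw [iUnion_Ico_two_pow]; exact (integrable_walshSign_mul_iff hξ).2 hf)
  rw [iUnion_Ico_two_pow, ← μplus, ← walshFT_eq_integral_walshSign f hξ] at hlim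
  exact hlim.congr fun K => (walshFT_indicator_eq_setIntegral f hξ).symm

lemma walshFT_indicator (hf : IntegrableOn f (Ico 0 (2 ^ L))) (hξ : ξ ∈ Ico 0 ((2 : ℝ) ^ K)) :
    walshFT ((Ico 0 (2 ^ L)).indicator f) ξ
      = ∑ i ∈ Finset.range (2 ^ (K + L)),
          walshChar (highBits (K + L) ⌊ξ * 2 ^ L⌋₊) (lowBits (K + L) i) * cellIntegral K f i := by
  unfold cellIntegral
  rw [walshFT_indicator_eq_setIntegral f hξ.1,
    ← setIntegral_floor_mul (φ := fun i => walshChar _ (lowBits (K + L) i)) hf]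
  exact setIntegral_congr_fun measurableSet_Ico fun y hy => by rw [walshSign_eq_walshChar hξ hy]

lemma aestronglyMeasurable_walshFT_indicator (hf : IntegrableOn f (Ico 0 (2 ^ L))) :
    AEStronglyMeasurable (walshFT ((Ico 0 (2 ^ L)).indicator f)) μplus :=
  aestronglyMeasurable_of_eq_floor L
    (fun K c => ∑ i ∈ Finset.range (2 ^ (K + L)),
      walshChar (highBits (K + L) c) (lowBits (K + L) i) * cellIntegral K f i)
    fun _ _ hξ => walshFT_indicator hf hξ

lemma walshMultiplier_indicator (hm : IntegrableOn m (Ico 0 (2 ^ K)))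
    (hg : IntegrableOn g (Ico 0 (2 ^ L))) (hx : x ∈ Ico 0 ((2 : ℝ) ^ L)) :
    walshMultiplier ((Ico 0 (2 ^ K)).indicator m) ((Ico 0 (2 ^ L)).indicator g) x
      = 2 ^ (K + L) * multiplierOp (cellIntegral L m ∘ ofHighBits) (cellIntegral K g ∘ ofLowBits)
          (lowBits (K + L) ⌊x * 2 ^ K⌋₊) := by
  have hmul : (fun ξ => (Ico 0 (2 ^ K)).indicator m ξ * walshFT ((Ico 0 (2 ^ L)).indicator g) ξ)
      = (Ico 0 (2 ^ K)).indicator fun ξ => m ξ * walshFT ((Ico 0 (2 ^ L)).indicator g) ξ :=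
    funext fun ξ => (indicator_mul_left _ _ _).symm
  let φ (c : ℕ) : ℝ := walshChar (highBits (K + L) c) (lowBits (K + L) ⌊x * 2 ^ K⌋₊) *
    ∑ i ∈ Finset.range (2 ^ (K + L)),
      walshChar (highBits (K + L) c) (lowBits (K + L) i) * cellIntegral K g i
  have hstep : EqOn
      (fun ξ => walshSign x ξ * (m ξ * walshFT ((Ico 0 (2 ^ L)).indicator g) ξ))
      (fun ξ => φ ⌊ξ * 2 ^ L⌋₊ * m ξ) (Ico 0 (2 ^ K)) := fun ξ hξ => by
    simp only
    rw [walshFT_indicator hg hξ, walshSign_comm, walshSign_eq_walshChar hξ hx]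
    ring
  rw [walshMultiplier, hmul, walshFT_indicator_eq_setIntegral _ hx.1,
    setIntegral_congr_fun measurableSet_Ico hstep, setIntegral_floor_mul hm,
    two_pow_mul_multiplierOp_apply, add_comm L K]
  refine Finset.sum_congr rfl fun c _ => ?_
  rw [walshChar_comm, cellIntegral]
  ring

lemma aestronglyMeasurable_indicator_walshMultiplier (hm : IntegrableOn m (Ico 0 (2 ^ K)))
    (hg : IntegrableOn g (Ico 0 (2 ^ L))) :
    AEStronglyMeasurable ((Ico 0 (2 ^ L)).indicator
      (walshMultiplier ((Ico 0 (2 ^ K)).indicator m) ((Ico 0 (2 ^ L)).indicator g))) μplus := by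
  rw [indicator_congr fun x hx => walshMultiplier_indicator hm hg hx]
  exact ((measurable_comp_floor K fun j => 2 ^ (K + L) * multiplierOp
    (cellIntegral L m ∘ ofHighBits) (cellIntegral K g ∘ ofLowBits) (lowBits (K + L) j)).indicator
    measurableSet_Ico).aestronglyMeasurable

lemma sum_enorm_cellIntegral_rpow_le (hq : 1 ≤ q) (hg : IntegrableOn g (Ico 0 (2 ^ L))) :
    ∑ j ∈ Finset.range (2 ^ (K + L)), ‖cellIntegral K g j‖ₑ ^ q
      ≤ ENNReal.ofReal (2 ^ K)⁻¹ ^ (q - 1) * ∫⁻ x in Ico 0 (2 ^ L), ‖g x‖ₑ ^ q := by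
  rw [setLIntegral_eq_sum_dyadicCell K L, Finset.mul_sum]
  refine Finset.sum_le_sum fun j hj => ?_
  rw [← volume_dyadicCell (j := j)]
  rw [← biUnion_dyadicCell K L, integrableOn_finset_iUnion] at hg
  exact enorm_setIntegral_rpow_le hq (hg j hj).aestronglyMeasurable

lemma abs_cellIntegral_le (hB : ∀ ξ, |m ξ| ≤ B) (j : ℕ) :
    |cellIntegral L m j| ≤ B * (2 ^ L)⁻¹ := by
  have hle := norm_setIntegral_le_of_norm_le_const (f := m) volume_dyadicCell_lt_top
    fun ξ (_ : ξ ∈ dyadicCell L j) => hB ξ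
  rwa [measureReal_def, volume_dyadicCell, ENNReal.toReal_ofReal (by positivity)] at hle

lemma setLIntegral_enorm_walshMultiplier_indicator (hm : IntegrableOn m (Ico 0 (2 ^ K)))
    (hg : IntegrableOn g (Ico 0 (2 ^ L))) (hq : 0 ≤ q) :
    ∫⁻ x in Ico 0 (2 ^ L), ‖walshMultiplier ((Ico 0 (2 ^ K)).indicator m)
        ((Ico 0 (2 ^ L)).indicator g) x‖ₑ ^ q
      = ENNReal.ofReal (2 ^ K)⁻¹ * (ENNReal.ofReal (2 ^ (K + L)) ^ q *
          ∑ x : WalshGroup (Fin (K + L)), ‖multiplierOp (cellIntegral L m ∘ ofHighBits)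
            (cellIntegral K g ∘ ofLowBits) x‖ₑ ^ q) := by
  rw [setLIntegral_congr_fun measurableSet_Ico fun x hx => by
      rw [walshMultiplier_indicator hm hg hx],
    setLIntegral_floor (ψ := fun j => ‖2 ^ (K + L) * multiplierOp (cellIntegral L m ∘ ofHighBits)
      (cellIntegral K g ∘ ofLowBits) (lowBits (K + L) j)‖ₑ ^ q),
    sum_range_lowBits fun x => ‖2 ^ (K + L) * multiplierOp (cellIntegral L m ∘ ofHighBits)
      (cellIntegral K g ∘ ofLowBits) x‖ₑ ^ q]
  simp only [enorm_mul, ENNReal.mul_rpow_of_nonneg _ _ hq, Real.enorm_of_nonneg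
    (by positivity : (0 : ℝ) ≤ 2 ^ (K + L)), ← Finset.mul_sum]

/-- At every scale `2^(-L)` and on every interval `[0, 2^(n - L))`, the dyadic averages of `m` are
dyadically constant off at most `N` cells. -/
def HasDyadicComplexity (m : ℝ → ℝ) (N : ℕ) : Prop :=
  ∀ n L, ∃ X : Finset ℕ, X.card ≤ N ∧ DyadicallyConstantOff X (2 ^ n) (cellIntegral L m)

lemma ofReal_inv_mul_rescale {s t A : ℝ} (hs : 0 < s) (ht : 0 < t) (hq : 0 ≤ q) :
    ENNReal.ofReal s⁻¹ * (ENNReal.ofReal (s * t) ^ q *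
        (ENNReal.ofReal (A * t⁻¹) ^ q * ENNReal.ofReal s⁻¹ ^ (q - 1)))
      = ENNReal.ofReal A ^ q := by
  have hpow : ENNReal.ofReal s⁻¹ * ENNReal.ofReal s⁻¹ ^ (q - 1) = ENNReal.ofReal s⁻¹ ^ q := by
    conv_lhs => enter [1]; rw [← ENNReal.rpow_one (ENNReal.ofReal s⁻¹)]
    rw [← ENNReal.rpow_add _ _ (by simpa using hs) ENNReal.ofReal_ne_top, add_sub_cancel]
  calc _ = (ENNReal.ofReal s⁻¹ * ENNReal.ofReal (s * t) * ENNReal.ofReal (A * t⁻¹)) ^ q := by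
        rw [ENNReal.mul_rpow_of_nonneg _ _ hq, ENNReal.mul_rpow_of_nonneg _ _ hq, ← hpow]
        ring
    _ = _ := by
        rw [← ENNReal.ofReal_mul (by positivity), ← ENNReal.ofReal_mul (by positivity)]
        congr 2
        field_simp

lemma setLIntegral_enorm_walshMultiplier_indicator_le {N : ℕ} (hq1 : 1 < q) (hC0 : 0 ≤ C)
    (hC : IsMultiplierConstant q C) (hB : ∀ ξ, |m ξ| ≤ B) (hN : 1 ≤ N)
    (hmN : HasDyadicComplexity m N) (hm : IntegrableOn m (Ico 0 (2 ^ K)))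
    (hg : IntegrableOn g (Ico 0 (2 ^ L))) :
    ∫⁻ x in Ico 0 (2 ^ L), ‖walshMultiplier ((Ico 0 (2 ^ K)).indicator m)
        ((Ico 0 (2 ^ L)).indicator g) x‖ₑ ^ q
      ≤ ENNReal.ofReal (C * N ^ |1 / q - 1 / 2| * B) ^ q *
          ∫⁻ x in Ico 0 (2 ^ L), ‖g x‖ₑ ^ q := by
  have hq0 : 0 < q := one_pos.trans hq1
  obtain ⟨X, hX, hconst⟩ := hmN (K + L) L
  have hsum : ∑ x, ‖(cellIntegral K g ∘ ofLowBits (n := K + L)) x‖ₑ ^ q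
      = ∑ j ∈ Finset.range (2 ^ (K + L)), ‖cellIntegral K g j‖ₑ ^ q := by
    rw [← sum_range_lowBits]
    refine Finset.sum_congr rfl fun j hj => ?_
    rw [Function.comp_apply, ofLowBits_lowBits (Finset.mem_range.1 hj)]
  have hdiscrete := hC.sum_enorm_rpow_le hq0 hC0 (constantOff_of_dyadicallyConstantOff hconst)
    (fun ξ => abs_cellIntegral_le hB (ofHighBits ξ)) hN (Finset.card_image_le.trans hX)
    (cellIntegral K g ∘ ofLowBits)
  rw [hsum] at hdiscrete
  rw [setLIntegral_enorm_walshMultiplier_indicator hm hg hq0.le]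
  calc _ ≤ ENNReal.ofReal (2 ^ K)⁻¹ * (ENNReal.ofReal (2 ^ (K + L)) ^ q *
        (ENNReal.ofReal (C * N ^ |1 / q - 1 / 2| * (B * (2 ^ L)⁻¹)) ^ q *
          (ENNReal.ofReal (2 ^ K)⁻¹ ^ (q - 1) * ∫⁻ x in Ico 0 (2 ^ L), ‖g x‖ₑ ^ q))) := by
        gcongr
        exact hdiscrete.trans (by gcongr; exact sum_enorm_cellIntegral_rpow_le hq1.le hg)
    _ = _ := by
        rw [← ofReal_inv_mul_rescale (A := C * N ^ |1 / q - 1 / 2| * B) (pow_pos two_pos K)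
          (pow_pos two_pos L) hq0.le, mul_assoc _ B, pow_add]
        ring

end HalfLine

section MultiplierNorm

open WalshGroup

variable {m g : ℝ → ℝ} {K L N : ℕ} {x q C B : ℝ}

lemma eLpNorm_indicator_walshMultiplier_le (hq1 : 1 < q) (hC0 : 0 ≤ C)
    (hC : IsMultiplierConstant q C) (hB : ∀ ξ, |m ξ| ≤ B) (hN : 1 ≤ N)
    (hmN : HasDyadicComplexity m N) (hm : IntegrableOn m (Ico 0 (2 ^ K)))
    (hg : IntegrableOn g (Ico 0 (2 ^ L))) :
    eLpNorm ((Ico 0 (2 ^ L)).indicator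
        (walshMultiplier ((Ico 0 (2 ^ K)).indicator m) ((Ico 0 (2 ^ L)).indicator g)))
        (ENNReal.ofReal q) μplus
      ≤ ENNReal.ofReal (C * N ^ |1 / q - 1 / 2| * B) * eLpNorm g (ENNReal.ofReal q) μplus := by
  have hq0 : 0 < q := one_pos.trans hq1
  have hp : ENNReal.ofReal q ≠ 0 := by simpa using hq0
  rw [eLpNorm_indicator_eq_eLpNorm_restrict measurableSet_Ico, μplus,
    Measure.restrict_restrict measurableSet_Ico,
    inter_eq_self_of_subset_left Ico_subset_Ici_self]
  have hmono : volume.restrict (Ico (0 : ℝ) (2 ^ L)) ≤ volume.restrict (Ici 0) :=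
    Measure.restrict_mono Ico_subset_Ici_self le_rfl
  refine le_trans ?_ (mul_le_mul_right (eLpNorm_mono_measure g hmono) _)
  rw [eLpNorm_eq_lintegral_rpow_enorm_toReal hp ENNReal.ofReal_ne_top,
    eLpNorm_eq_lintegral_rpow_enorm_toReal hp ENNReal.ofReal_ne_top,
    ENNReal.toReal_ofReal hq0.le]
  refine (ENNReal.rpow_le_rpow (setLIntegral_enorm_walshMultiplier_indicator_le hq1 hC0 hC hB hN
    hmN hm hg) (one_div_nonneg.2 hq0.le)).trans_eq ?_
  rw [ENNReal.mul_rpow_of_nonneg _ _ (one_div_nonneg.2 hq0.le), ← ENNReal.rpow_mul,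
    mul_one_div_cancel hq0.ne', ENNReal.rpow_one]

lemma tendsto_walshMultiplier_indicator_right (hm : Integrable m μplus)
    (hg : Integrable g μplus) (hx : 0 ≤ x) :
    Tendsto (fun L : ℕ => walshMultiplier m ((Ico 0 (2 ^ L)).indicator g) x) atTop
      (nhds (walshMultiplier m g x)) := by
  have hbound (L : ℕ) {ξ : ℝ} (hξ : 0 ≤ ξ) :
      |walshFT ((Ico 0 (2 ^ L)).indicator g) ξ| ≤ ∫ y, |g y| ∂μplus := by
    refine (abs_walshFT_le _ hξ).trans (integral_mono_of_nonneg
      (.of_forall fun _ => abs_nonneg _) hg.abs (.of_forall fun y => ?_))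
    simpa only [Real.norm_eq_abs] using norm_indicator_le_norm_self g y
  simp only [walshMultiplier, walshFT_eq_integral_walshSign _ hx]
  refine tendsto_integral_of_dominated_convergence (fun ξ => |m ξ| * ∫ y, |g y| ∂μplus)
    (fun L => ?_) (hm.abs.mul_const _) (fun L => ?_) ?_
  · exact (aestronglyMeasurable_walshSign hx).mul (hm.aestronglyMeasurable.mul
      (aestronglyMeasurable_walshFT_indicator
        (IntegrableOn.mono_set (t := Ici 0) hg Ico_subset_Ici_self)))
  · filter_upwards [ae_restrict_mem measurableSet_Ici] with ξ hξ
    rw [Real.norm_eq_abs, abs_mul, abs_walshSign, one_mul, abs_mul]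
    gcongr
    exact hbound L hξ
  · filter_upwards [ae_restrict_mem measurableSet_Ici] with ξ hξ
    exact ((tendsto_walshFT_indicator hg hξ).const_mul _).const_mul _

lemma tendsto_indicator_walshMultiplier (hm : Integrable m μplus) (hg : Integrable g μplus) :
    ∀ᵐ x ∂μplus, Tendsto (fun L : ℕ => (Ico 0 (2 ^ L)).indicator
      (walshMultiplier m ((Ico 0 (2 ^ L)).indicator g)) x) atTop
        (nhds (walshMultiplier m g x)) := by
  filter_upwards [ae_restrict_mem measurableSet_Ici] with x hx
  refine (tendsto_walshMultiplier_indicator_right hm hg hx).congr' ?_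
  filter_upwards [(tendsto_pow_atTop_atTop_of_one_lt one_lt_two).eventually_gt_atTop x] with L hL
  rw [indicator_of_mem (mem_Ico.2 ⟨hx, hL⟩)]

lemma tendsto_walshMultiplier_indicator_left
    (hmg : Integrable (fun ξ => m ξ * walshFT g ξ) μplus) (hx : 0 ≤ x) :
    Tendsto (fun K : ℕ => walshMultiplier ((Ico 0 (2 ^ K)).indicator m) g x) atTop
      (nhds (walshMultiplier m g x)) := by
  refine (tendsto_walshFT_indicator hmg hx).congr fun K => ?_
  simp only [walshMultiplier, ← indicator_mul_left]

lemma walshMultiplier_of_not_integrable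
    (h : ¬ (Integrable g μplus ∧ Integrable (fun ξ => m ξ * walshFT g ξ) μplus)) (hx : 0 ≤ x) :
    walshMultiplier m g x = 0 := by
  by_cases hg : Integrable g μplus
  · exact walshFT_of_not_integrable (fun hmg => h ⟨hg, hmg⟩) hx
  · exact setIntegral_eq_zero_of_forall_eq_zero fun ξ hξ => by
      simp only [walshFT_of_not_integrable hg hξ, mul_zero]

lemma eLpNorm_walshMultiplier_le (hq1 : 1 < q) (hC0 : 0 ≤ C) (hC : IsMultiplierConstant q C)
    (hB : ∀ ξ, |m ξ| ≤ B) (hN : 1 ≤ N) (hmN : HasDyadicComplexity m N)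
    (hm : AEStronglyMeasurable m) (g : ℝ → ℝ) :
    eLpNorm (walshMultiplier m g) (ENNReal.ofReal q) μplus
      ≤ ENNReal.ofReal (C * N ^ |1 / q - 1 / 2| * B) * eLpNorm g (ENNReal.ofReal q) μplus := by
  by_cases h : Integrable g μplus ∧ Integrable (fun ξ => m ξ * walshFT g ξ) μplus
  swap
  · have hzero : walshMultiplier m g =ᵐ[μplus] 0 :=
      (ae_restrict_mem measurableSet_Ici).mono fun x hx => walshMultiplier_of_not_integrable h hx
    rw [eLpNorm_congr_ae hzero, eLpNorm_zero]
    exact zero_le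
  have hmK (K : ℕ) : IntegrableOn m (Ico 0 (2 ^ K)) :=
    Measure.integrableOn_of_bounded measure_Ico_lt_top.ne hm (.of_forall hB)
  have hmK' (K : ℕ) : Integrable ((Ico 0 (2 ^ K)).indicator m) μplus :=
    ((hmK K).integrable_indicator measurableSet_Ico).restrict
  have hgL (L : ℕ) : IntegrableOn g (Ico 0 (2 ^ L)) :=
    IntegrableOn.mono_set (t := Ici 0) h.1 Ico_subset_Ici_self
  have hmeas (K L : ℕ) := aestronglyMeasurable_indicator_walshMultiplier (hmK K) (hgL L)
  have htendsto (K : ℕ) := tendsto_indicator_walshMultiplier (hmK' K) h.1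
  refine Lp.eLpNorm_le_of_ae_tendsto (u := atTop) (.of_forall fun K : ℕ =>
    Lp.eLpNorm_le_of_ae_tendsto (u := atTop) (.of_forall fun L =>
      eLpNorm_indicator_walshMultiplier_le hq1 hC0 hC hB hN hmN (hmK K) (hgL L))
      (hmeas K) (htendsto K))
    (fun K => aestronglyMeasurable_of_tendsto_ae _ (hmeas K) (htendsto K))
    ((ae_restrict_mem measurableSet_Ici).mono fun x hx =>
      tendsto_walshMultiplier_indicator_left h.2 hx)

theorem WalshGroup.IsMultiplierConstant.Mq_le (hC : IsMultiplierConstant q C) (hq1 : 1 < q)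
    (hC0 : 0 ≤ C) (hB : ∀ ξ, |m ξ| ≤ B) (hN : 1 ≤ N) (hmN : HasDyadicComplexity m N)
    (hm : AEStronglyMeasurable m) :
    Mq q m ≤ ENNReal.ofReal (C * N ^ |1 / q - 1 / 2| * B) :=
  iSup₂_le fun g hg => by
    simpa only [hg, mul_one, walshMultiplier] using
      eLpNorm_walshMultiplier_le hq1 hC0 hC hB hN hmN hm g

end MultiplierNorm

/-! ### Finite sums of intervals -/

section IntervalSums

open WalshGroup

lemma exists_dyadicallyConstantOff_of_between {M : ℕ} {a : ℕ → ℝ} {w : ℝ} {S : Finset ℕ}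
    (hzero : ∀ c < M, c ∉ S → a c = 0)
    (hbetween : ∀ i ∈ S, ∀ j ∈ S, ∀ k, i < k → k < j → a k = w) :
    ∃ X : Finset ℕ, X.card ≤ 2 ∧ DyadicallyConstantOff X M a := by
  rcases S.eq_empty_or_nonempty with rfl | hS
  · exact ⟨∅, by simp, fun p c c' hc hc' _ _ => by
      rw [hzero c hc (Finset.notMem_empty c), hzero c' hc' (Finset.notMem_empty c')]⟩
  refine ⟨{S.min' hS, S.max' hS}, Finset.card_le_two, fun p c c' hc hc' hcc hX => ?_⟩
  have hmin : S.min' hS / 2 ^ p ≠ c / 2 ^ p := hX _ (Finset.mem_insert_self _ _)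
  have hmax : S.max' hS / 2 ^ p ≠ c / 2 ^ p :=
    hX _ (Finset.mem_insert_of_mem (Finset.mem_singleton_self _))
  by_cases hmeets : ∃ d ∈ S, d / 2 ^ p = c / 2 ^ p
  · obtain ⟨d, hdS, hd⟩ := hmeets
    have hinside {k : ℕ} (hk : k / 2 ^ p = c / 2 ^ p) : a k = w := by
      have hmin_le := Nat.div_le_div_right (c := 2 ^ p) (S.min'_le d hdS)
      have hle_max := Nat.div_le_div_right (c := 2 ^ p) (S.le_max' d hdS)
      exact hbetween _ (S.min'_mem hS) _ (S.max'_mem hS) k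
        (Nat.lt_of_div_lt_div (c := 2 ^ p) (by omega))
        (Nat.lt_of_div_lt_div (c := 2 ^ p) (by omega))
    rw [hinside rfl, hinside hcc.symm]
  · have houtside {k : ℕ} (hkM : k < M) (hk : k / 2 ^ p = c / 2 ^ p) : a k = 0 :=
      hzero k hkM fun hkS => hmeets ⟨k, hkS, hk⟩
    rw [houtside hc rfl, houtside hc' hcc.symm]

lemma hasDyadicComplexity_indicator {v : Set ℝ} (hv : v.OrdConnected) :
    HasDyadicComplexity (v.indicator fun _ => 1) 2 := by
  intro n L
  refine exists_dyadicallyConstantOff_of_between (w := (2 ^ L)⁻¹)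
    (S := {c ∈ Finset.range (2 ^ n) | (dyadicCell L c ∩ v).Nonempty})
    (fun c hc hcS => ?_) fun i hi j hj k hik hkj => ?_
  · refine setIntegral_eq_zero_of_forall_eq_zero fun z hz => indicator_of_notMem (fun hzv => ?_) _
    exact hcS (Finset.mem_filter.2 ⟨Finset.mem_range.2 hc, z, hz, hzv⟩)
  · obtain ⟨-, x, hx, hxv⟩ := Finset.mem_filter.1 hi
    obtain ⟨-, y, hy, hyv⟩ := Finset.mem_filter.1 hj
    have hone : EqOn (v.indicator fun _ => 1) (fun _ => (1 : ℝ)) (dyadicCell L k) := fun z hz =>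
      indicator_of_mem (hv.out hxv hyv
        ⟨(lt_of_mem_dyadicCell hik hx hz).le, (lt_of_mem_dyadicCell hkj hz hy).le⟩) _
    rw [cellIntegral, setIntegral_congr_fun measurableSet_dyadicCell hone, setIntegral_const,
      measureReal_def, volume_dyadicCell, ENNReal.toReal_ofReal (by positivity), smul_eq_mul,
      mul_one]

variable {ι : Type*} {s : Finset ι} {N : ℕ}

lemma cellIntegral_sum_mul {f : ι → ℝ → ℝ} (hf : ∀ i ∈ s, LocallyIntegrable (f i))
    (b : ι → ℝ) (L j : ℕ) :
    cellIntegral L (fun ξ => ∑ i ∈ s, b i * f i ξ) j = ∑ i ∈ s, b i * cellIntegral L (f i) j := by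
  have hcell (i : ι) (hi : i ∈ s) : IntegrableOn (f i) (dyadicCell L j) :=
    ((hf i hi).integrableOn_isCompact isCompact_Icc).mono_set Ico_subset_Icc_self
  simp only [cellIntegral]
  rw [integral_finsetSum _ fun i hi => (hcell i hi).const_mul _]
  simp only [integral_const_mul]

lemma hasDyadicComplexity_sum_mul {f : ι → ℝ → ℝ} (hf : ∀ i ∈ s, LocallyIntegrable (f i))
    (h : ∀ i ∈ s, HasDyadicComplexity (f i) N) (b : ι → ℝ) :
    HasDyadicComplexity (fun ξ => ∑ i ∈ s, b i * f i ξ) (s.card * N) := by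
  intro n L
  choose! X hcard hconst using fun i (hi : i ∈ s) => h i hi n L
  refine ⟨s.biUnion X, Finset.card_biUnion_le_card_mul _ _ _ hcard,
    fun p c c' hc hc' hcc hX => ?_⟩
  simp only [cellIntegral_sum_mul hf]
  refine Finset.sum_congr rfl fun i hi => ?_
  rw [hconst i hi p c c' hc hc' hcc fun e he => hX e (Finset.mem_biUnion.2 ⟨i, hi, he⟩)]

lemma abs_sum_mul_indicator_le {α : Type*} {s : Finset (Set α)} {b : Set α → ℝ} {B : ℝ}
    (hs : (s : Set (Set α)).PairwiseDisjoint id) (hB : 0 ≤ B) (hb : ∀ v ∈ s, |b v| ≤ B) (ξ : α) :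
    |∑ v ∈ s, b v * v.indicator (fun _ => (1 : ℝ)) ξ| ≤ B := by
  by_cases hξ : ∃ v ∈ s, ξ ∈ v
  · obtain ⟨v, hv, hξv⟩ := hξ
    rw [Finset.sum_eq_single_of_mem v hv fun w hw hwv => by
      have hξw : ξ ∉ w := fun hξw => disjoint_left.1 (hs hw hv hwv) hξw hξv
      rw [indicator_of_notMem hξw, mul_zero],
      indicator_of_mem hξv, mul_one]
    exact hb v hv
  · rw [Finset.sum_eq_zero fun v hv => by
      rw [indicator_of_notMem fun hξv => hξ ⟨v, hv, hξv⟩, mul_zero], abs_zero]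
    exact hB

theorem interval_multiplier_general (q : ℝ) (hq1 : 1 < q) :
    ∃ C : ℝ, 0 < C ∧ ∀ Y : Set (Set ℝ), Y.Finite → Y.PairwiseDisjoint id →
      (∀ v ∈ Y, v.OrdConnected) → ∀ b : Set ℝ → ℝ,
        Mq q (fun ξ => ∑ᶠ v ∈ Y, b v * Set.indicator v (fun _ => (1 : ℝ)) ξ) ≤
          ENNReal.ofReal C * (Y.ncard : ℝ≥0∞) ^ |1 / q - 1 / 2| *
            ⨆ v ∈ Y, (‖b v‖₊ : ℝ≥0∞) := by
  obtain ⟨C, hC0, hC⟩ := exists_isMultiplierConstant hq1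
  refine ⟨C * 2 ^ |1 / q - 1 / 2|, by positivity, fun Y hY hdisj hconn b => ?_⟩
  rcases Y.eq_empty_or_nonempty with rfl | hne
  · have hzero : walshFT (fun _ => 0) = 0 := funext fun ξ => by simp [walshFT]
    simp [Mq, hzero]
  obtain ⟨Y, rfl⟩ := hY.exists_finset_coe
  have hind (v : Set ℝ) (hv : v ∈ Y) : LocallyIntegrable (v.indicator fun _ => (1 : ℝ)) :=
    (locallyIntegrable_const 1).indicator (hconn v hv).measurableSet
  set S := ⨆ v ∈ (Y : Set (Set ℝ)), (‖b v‖₊ : ℝ≥0∞)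
  have hS : S ≠ ∞ := by
    simp only [S, Finset.mem_coe, ← Finset.sup_eq_iSup]
    exact ((Finset.sup_lt_iff ENNReal.zero_lt_top).2 fun _ _ => ENNReal.coe_lt_top).ne
  have hb (v : Set ℝ) (hv : v ∈ Y) : |b v| ≤ S.toReal := by
    simpa using ENNReal.toReal_mono hS
      (le_biSup (fun v => (‖b v‖₊ : ℝ≥0∞)) (Finset.mem_coe.2 hv))
  have hle := hC.Mq_le hq1 hC0.le (abs_sum_mul_indicator_le hdisj ENNReal.toReal_nonneg hb)
    (Nat.mul_pos (Finset.card_pos.2 hne) two_pos)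
    (hasDyadicComplexity_sum_mul hind (fun v hv => hasDyadicComplexity_indicator (hconn v hv)) b)
    (Finset.aestronglyMeasurable_fun_sum _ fun v hv => (hind v hv).aestronglyMeasurable.const_mul _)
  simp only [finsum_mem_coe_finset, Set.ncard_coe_finset]
  refine hle.trans_eq ?_
  rw [ENNReal.ofReal_mul (by positivity), ENNReal.ofReal_toReal hS, Nat.cast_mul, Nat.cast_two,
    mul_comm (_ : ℝ) 2, Real.mul_rpow zero_le_two (Nat.cast_nonneg _), ← mul_assoc,
    ENNReal.ofReal_mul (by positivity),
    ← ENNReal.ofReal_rpow_of_nonneg (Nat.cast_nonneg _) (abs_nonneg _), ENNReal.ofReal_natCast]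

end IntervalSums

/-- Lemma 3.3: for a finite collection `Υ` of pairwise disjoint subintervals of `ℝ⁺`
and coefficients `b`, `‖Σ_υ b_υ 1_υ‖_{M^q} ≤ C_{q,ε} |Υ|^{|1/q - 1/2| + ε} sup_υ |b_υ|`. -/
theorem interval_multiplier (q eps : ℝ) (hq1 : 1 < q) (heps : 0 < eps) :
    ∃ C : ℝ, 0 < C ∧ ∀ Y : Set (Set ℝ), Y.Finite → Y.PairwiseDisjoint id →
      (∀ v ∈ Y, v ⊆ Set.Ici 0 ∧ v.OrdConnected) → ∀ b : Set ℝ → ℝ,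
        Mq q (fun ξ => ∑ᶠ v ∈ Y, b v * Set.indicator v (fun _ => (1 : ℝ)) ξ) ≤
          ENNReal.ofReal C * (Y.ncard : ℝ≥0∞) ^ (|1 / q - 1 / 2| + eps) *
            ⨆ v ∈ Y, (‖b v‖₊ : ℝ≥0∞) := by
  obtain ⟨C, hC, hle⟩ := interval_multiplier_general q hq1
  refine ⟨C, hC, fun Y hY hdisj hint b => ?_⟩
  refine (hle Y hY hdisj (fun v hv => (hint v hv).2) b).trans ?_
  rcases Y.eq_empty_or_nonempty with rfl | hne
  · simp
  · gcongr
    · exact_mod_cast (ncard_pos hY).2 hne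
    · linarith

end
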